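/- arXiv:2102.10241 — 8 statements merged into one kernel-verified Lean document; each statement's English description precedes it below -/
import Mathlib

section
/- Let k ≥ 2 and let n1, n2, n1', n2' be positive integers with n1 + n2 = n1' + n2' and max{n1, n2} < max{n1', n2'}. Then the largest eigenvalue of D(n1,k,n2) is strictly greater than the largest eigenvalue of D(n1',k,n2'), i.e. λ(D(n1,k,n2)) > λ(D(n1',k,n2')). -/
open Matrix

noncomputable section

/-- Distance matrix of the path on `m` vertices: entry `(i,j)` is `|i - j|`. -/
def pathD (m : ℕ) : Matrix (Fin m) (Fin m) ℝ := fun i j => |(i : ℝ) - (j : ℝ)|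

/-- The vector `(1, 2, …, m)ᵀ`. -/
def uVec (m : ℕ) : Fin m → ℝ := fun i => (i : ℝ) + 1

/-- The reversed vector `(m, m-1, …, 1)ᵀ`. -/
def wVec (m : ℕ) : Fin m → ℝ := fun i => (m : ℝ) - (i : ℝ)

/-- Largest real eigenvalue of a matrix. -/
def maxEig {ι : Type} [Fintype ι] (A : Matrix ι ι ℝ) : ℝ :=
  sSup {μ : ℝ | ∃ v : ι → ℝ, v ≠ 0 ∧ A.mulVec v = μ • v}

/-- Distance matrix of the clique path `ℙ_{n1+1,2,…,2,n2+1}` with `k` cliques. -/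
def cliquePathD (n1 k n2 : ℕ) :
    Matrix (Fin n1 ⊕ Fin (k - 1) ⊕ Fin n2) (Fin n1 ⊕ Fin (k - 1) ⊕ Fin n2) ℝ :=
  fun p q =>
    match p, q with
    | Sum.inl i, Sum.inl j => if i = j then 0 else 1
    | Sum.inl _, Sum.inr (Sum.inl j) => uVec (k - 1) j
    | Sum.inl _, Sum.inr (Sum.inr _) => (k : ℝ)
    | Sum.inr (Sum.inl i), Sum.inl _ => uVec (k - 1) i
    | Sum.inr (Sum.inl i), Sum.inr (Sum.inl j) => pathD (k - 1) i j
    | Sum.inr (Sum.inl i), Sum.inr (Sum.inr _) => wVec (k - 1) i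
    | Sum.inr (Sum.inr _), Sum.inl _ => (k : ℝ)
    | Sum.inr (Sum.inr _), Sum.inr (Sum.inl j) => wVec (k - 1) j
    | Sum.inr (Sum.inr i), Sum.inr (Sum.inr j) => if i = j then 0 else 1



/-- Perron-type facts for symmetric matrices with nonnegative entries, positive off the diagonal. -/
lemma perron_aux {ι : Type} [Fintype ι] [Nonempty ι] (A : Matrix ι ι ℝ)
    (hs : ∀ i j, A i j = A j i) (h0 : ∀ i j, 0 ≤ A i j) (hpos : ∀ i j, i ≠ j → 0 < A i j) :
    (∃ w : ι → ℝ, (∀ i, 0 < w i) ∧ A.mulVec w = maxEig A • w) ∧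
    ∀ v : ι → ℝ, v ⬝ᵥ A.mulVec v ≤ maxEig A * (v ⬝ᵥ v) := by
  classical
  have hcont : Continuous (fun v : ι → ℝ => v ⬝ᵥ A.mulVec v) := by
    unfold dotProduct mulVec dotProduct
    fun_prop
  have hcont2 : Continuous (fun v : ι → ℝ => v ⬝ᵥ v) := by
    unfold dotProduct
    fun_prop
  have hcomp : IsCompact {v : ι → ℝ | v ⬝ᵥ v = 1} := by
    refine Metric.isCompact_of_isClosed_isBounded (isClosed_eq hcont2 continuous_const) ?_
    refine (Metric.isBounded_closedBall (x := (0 : ι → ℝ)) (r := 1)).subset ?_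
    intro v hv
    rw [mem_closedBall_zero_iff, pi_norm_le_iff_of_nonneg zero_le_one]
    intro i
    have h1 : v i * v i ≤ v ⬝ᵥ v :=
      Finset.single_le_sum (f := fun i => v i * v i) (fun j _ => mul_self_nonneg _) (Finset.mem_univ i)
    rw [show v ⬝ᵥ v = 1 from hv] at h1
    rw [Real.norm_eq_abs, abs_le]
    constructor <;> nlinarith
  have hne : {v : ι → ℝ | v ⬝ᵥ v = 1}.Nonempty := by
    obtain ⟨i⟩ := ‹Nonempty ι›
    exact ⟨Pi.single i 1, by simp⟩
  obtain ⟨v, hv, hmax⟩ := hcomp.exists_isMaxOn hne hcont.continuousOn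
  set M := v ⬝ᵥ A.mulVec v with hM
  have hv1 : v ⬝ᵥ v = 1 := hv
  have hquad : ∀ x : ι → ℝ, x ⬝ᵥ A.mulVec x ≤ M * (x ⬝ᵥ x) := by
    intro x
    by_cases hx : x = 0
    · simp [hx]
    have hxx : 0 < x ⬝ᵥ x := by
      have h1 : 0 ≤ x ⬝ᵥ x := Finset.sum_nonneg (fun i _ => mul_self_nonneg _)
      exact lt_of_le_of_ne h1 (fun h => hx (dotProduct_self_eq_zero.1 h.symm))
    set s := Real.sqrt (x ⬝ᵥ x) with hsdef
    have hspos : 0 < s := Real.sqrt_pos.2 hxx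
    have hss : s * s = x ⬝ᵥ x := Real.mul_self_sqrt hxx.le
    have hmem : (s⁻¹ • x) ∈ {v : ι → ℝ | v ⬝ᵥ v = 1} := by
      simp only [Set.mem_ofPred_eq, smul_dotProduct, dotProduct_smul, smul_eq_mul]
      rw [← hss]; field_simp
    have := hmax hmem
    simp only [Set.mem_ofPred_eq, smul_dotProduct, dotProduct_smul, mulVec_smul, smul_eq_mul] at this
    rw [← hss]
    have h2 : x ⬝ᵥ A.mulVec x = (s⁻¹ * (s⁻¹ * (x ⬝ᵥ A.mulVec x))) * (s * s) := by field_simp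
    rw [h2]
    exact mul_le_mul_of_nonneg_right this (by positivity)
  -- the absolute value of the maximiser
  set w : ι → ℝ := fun i => |v i| with hw
  have hww : w ⬝ᵥ w = 1 := by
    rw [← hv1]; simp [dotProduct, hw]
  have hwM : w ⬝ᵥ A.mulVec w = M := by
    apply le_antisymm
    · have := hquad w
      rwa [hww, mul_one] at this
    · rw [hM]
      unfold dotProduct mulVec dotProduct
      simp only [Finset.mul_sum]
      refine Finset.sum_le_sum (fun i _ => Finset.sum_le_sum (fun j _ => ?_))
      have h1 : v i * v j ≤ w i * w j := by
        simp only [hw]; rw [← abs_mul]; exact le_abs_self _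
      have := mul_le_mul_of_nonneg_left h1 (h0 i j)
      nlinarith
  have hPSD : (M • (1 : Matrix ι ι ℝ) - A).PosSemidef := by
    refine PosSemidef.of_dotProduct_mulVec_nonneg ?_ ?_
    · ext i j
      simp only [conjTranspose_apply, Matrix.sub_apply, Matrix.smul_apply, one_apply, star_trivial, hs i j,
        @eq_comm _ i j]
    · intro x
      have := hquad x
      simp only [star_trivial, sub_mulVec, smul_mulVec, one_mulVec, dotProduct_sub, dotProduct_smul,
        smul_eq_mul]
      linarith
  have hweig : A.mulVec w = M • w := by
    have h := (hPSD.dotProduct_mulVec_zero_iff w).1 (by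
      simp only [star_trivial, sub_mulVec, smul_mulVec, one_mulVec, dotProduct_sub, dotProduct_smul,
        smul_eq_mul, hww, hwM]
      ring)
    simp only [sub_mulVec, smul_mulVec, one_mulVec] at h
    exact (sub_eq_zero.1 h).symm
  have hw0 : w ≠ 0 := by
    intro h; rw [h] at hww; simp at hww
  have hmaxE : maxEig A = M := by
    have : IsGreatest {μ : ℝ | ∃ v : ι → ℝ, v ≠ 0 ∧ A.mulVec v = μ • v} M := by
      refine ⟨⟨w, hw0, hweig⟩, ?_⟩
      rintro μ ⟨x, hx, hxe⟩
      have h := hquad x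
      rw [hxe, dotProduct_smul, smul_eq_mul] at h
      have hxx : 0 < x ⬝ᵥ x := by
        have h1 : 0 ≤ x ⬝ᵥ x := Finset.sum_nonneg (fun i _ => mul_self_nonneg _)
        exact lt_of_le_of_ne h1 (fun h => hx (dotProduct_self_eq_zero.1 h.symm))
      exact le_of_mul_le_mul_right h hxx
    exact this.csSup_eq
  rw [hmaxE]
  refine ⟨⟨w, ?_, hweig⟩, hquad⟩
  intro i
  have hwn : ∀ j, 0 ≤ w j := fun j => abs_nonneg _
  refine lt_of_le_of_ne (hwn i) (fun hi => hw0 ?_)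
  have h := congrFun hweig i
  simp only [Pi.smul_apply, smul_eq_mul, ← hi, mul_zero] at h
  unfold mulVec dotProduct at h
  rw [Finset.sum_eq_zero_iff_of_nonneg (fun j _ => mul_nonneg (h0 i j) (hwn j))] at h
  funext j
  by_cases hij : i = j
  · rw [← hij, ← hi]; rfl
  · have := h j (Finset.mem_univ j)
    exact (mul_eq_zero.1 this).resolve_left (hpos i j hij).ne'

/-- `cliquePathD` with `k = m + 1`. -/
def cpD (p m q : ℕ) : Matrix (Fin p ⊕ Fin m ⊕ Fin q) (Fin p ⊕ Fin m ⊕ Fin q) ℝ :=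
  cliquePathD p (m + 1) q

lemma cpD_symm (p m q : ℕ) (i j) : cpD p m q i j = cpD p m q j i := by
  rcases i with i | i | i <;> rcases j with j | j | j <;>
    simp [cpD, cliquePathD, eq_comm, pathD, abs_sub_comm]

lemma cpD_pos (p m q : ℕ) (i j) (h : i ≠ j) : 0 < cpD p m q i j := by
  have hu : ∀ i : Fin m, 0 < uVec m i := fun i => by unfold uVec; positivity
  have hw : ∀ i : Fin m, 0 < wVec m i := fun i => by
    unfold wVec
    have : (i : ℝ) < m := by exact_mod_cast i.2
    linarith
  have hD : ∀ i j : Fin m, i ≠ j → 0 < pathD m i j := fun i j h => by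
    unfold pathD
    rw [abs_pos, sub_ne_zero]
    exact fun h' => h (Fin.ext (by exact_mod_cast h'))
  rcases i with i | i | i <;> rcases j with j | j | j
  · have : i ≠ j := by simpa using h
    simp [cpD, cliquePathD, this]
  · exact hu j
  · simp only [cpD, cliquePathD]; positivity
  · exact hu i
  · exact hD i j (by simpa using h)
  · exact hw i
  · simp only [cpD, cliquePathD]; positivity
  · exact hw j
  · have : i ≠ j := by simpa using h
    simp [cpD, cliquePathD, this]

lemma cpD_nonneg (p m q : ℕ) (i j) : 0 ≤ cpD p m q i j := by
  by_cases h : i = j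
  · subst h
    rcases i with i | i | i <;> simp [cpD, cliquePathD, pathD]
  · exact (cpD_pos p m q i j h).le

lemma sum_off {p : ℕ} (i : Fin p) (v : Fin p → ℝ) :
    ∑ j, (if i = j then (0 : ℝ) else 1) * v j = ∑ j, v j - v i := by
  have : ∀ j, (if i = j then (0 : ℝ) else 1) * v j = v j - if i = j then v j else 0 := by
    intro j; split_ifs <;> simp
  simp [this, Finset.sum_sub_distrib]

lemma cpD_mulVec_left (p m q : ℕ) (v) (i : Fin p) : (cpD p m q).mulVec v (Sum.inl i) =
    (∑ j, v (Sum.inl j) - v (Sum.inl i)) + uVec m ⬝ᵥ (fun j => v (Sum.inr (Sum.inl j)))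
      + (m + 1) * ∑ j, v (Sum.inr (Sum.inr j)) := by
  rw [← sum_off i (fun j => v (Sum.inl j)), Finset.mul_sum]
  simp only [mulVec, dotProduct, Fintype.sum_sum_type]
  rw [add_assoc]
  simp [cpD, cliquePathD]

lemma cpD_mulVec_mid (p m q : ℕ) (v) (i : Fin m) : (cpD p m q).mulVec v (Sum.inr (Sum.inl i)) =
    (∑ j, v (Sum.inl j)) * uVec m i + (pathD m).mulVec (fun j => v (Sum.inr (Sum.inl j))) i
      + (∑ j, v (Sum.inr (Sum.inr j))) * wVec m i := by
  rw [mul_comm _ (uVec m i), mul_comm _ (wVec m i), Finset.mul_sum, Finset.mul_sum]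
  simp only [mulVec, dotProduct, Fintype.sum_sum_type]
  rw [add_assoc]
  simp [cpD, cliquePathD]

lemma cpD_mulVec_right (p m q : ℕ) (v) (i : Fin q) : (cpD p m q).mulVec v (Sum.inr (Sum.inr i)) =
    (m + 1) * ∑ j, v (Sum.inl j) + wVec m ⬝ᵥ (fun j => v (Sum.inr (Sum.inl j)))
      + (∑ j, v (Sum.inr (Sum.inr j)) - v (Sum.inr (Sum.inr i))) := by
  rw [← sum_off i (fun j => v (Sum.inr (Sum.inr j))), Finset.mul_sum]
  simp only [mulVec, dotProduct, Fintype.sum_sum_type]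
  rw [add_assoc]
  simp [cpD, cliquePathD]

lemma cpD_quad (p m q : ℕ) (a b : ℝ) (y : Fin m → ℝ) :
    (Sum.elim (fun _ => a) (Sum.elim y (fun _ => b))) ⬝ᵥ
      (cpD p m q).mulVec (Sum.elim (fun _ => a) (Sum.elim y (fun _ => b))) =
    p * a * (p * a - a + uVec m ⬝ᵥ y + (m + 1) * (q * b)) +
    (p * a * (uVec m ⬝ᵥ y) + y ⬝ᵥ (pathD m).mulVec y + q * b * (wVec m ⬝ᵥ y)) +
    q * b * ((m + 1) * (p * a) + wVec m ⬝ᵥ y + (q * b - b)) := by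
  have hmid : ∀ P Q : ℝ, P * (uVec m ⬝ᵥ y) + y ⬝ᵥ (pathD m).mulVec y + Q * (wVec m ⬝ᵥ y) =
      ∑ i, y i * (P * uVec m i + (pathD m).mulVec y i + Q * wVec m i) := by
    intro P Q
    simp only [dotProduct, Finset.mul_sum, ← Finset.sum_add_distrib]
    exact Finset.sum_congr rfl (fun i _ => by ring)
  rw [hmid]
  rw [dotProduct, Fintype.sum_sum_type, Fintype.sum_sum_type]
  simp only [cpD_mulVec_left, cpD_mulVec_mid, cpD_mulVec_right, Sum.elim_inl, Sum.elim_inr,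
    Finset.sum_const, Finset.card_univ, Fintype.card_fin, nsmul_eq_mul]
  ring

lemma cpD_self (p m q : ℕ) (a b : ℝ) (y : Fin m → ℝ) :
    (Sum.elim (fun _ : Fin p => a) (Sum.elim y (fun _ : Fin q => b))) ⬝ᵥ
      (Sum.elim (fun _ => a) (Sum.elim y (fun _ => b))) = p * a * a + y ⬝ᵥ y + q * b * b := by
  rw [dotProduct, Fintype.sum_sum_type, Fintype.sum_sum_type]
  simp only [Sum.elim_inl, Sum.elim_inr, dotProduct,
    Finset.sum_const, Finset.card_univ, Fintype.card_fin, nsmul_eq_mul]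
  ring

/-! ### Reversal -/

lemma rev_cast {m : ℕ} (i : Fin m) : ((Fin.rev i : Fin m) : ℝ) = m - 1 - i := by
  have h : (Fin.rev i : ℕ) + (i + 1) = m := by rw [Fin.val_rev]; omega
  have : ((Fin.rev i : ℕ) : ℝ) + (i + 1) = m := by exact_mod_cast h
  linarith

lemma uVec_rev {m : ℕ} (i : Fin m) : uVec m (Fin.rev i) = wVec m i := by
  unfold uVec wVec; rw [rev_cast]; ring

lemma wVec_rev {m : ℕ} (i : Fin m) : wVec m (Fin.rev i) = uVec m i := by
  unfold uVec wVec; rw [rev_cast]; ring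

lemma pathD_rev {m : ℕ} (i j : Fin m) : pathD m (Fin.rev i) (Fin.rev j) = pathD m i j := by
  unfold pathD; rw [rev_cast, rev_cast, ← abs_neg]; congr 1; ring

lemma sum_rev {m : ℕ} (f : Fin m → ℝ) : ∑ i, f (Fin.rev i) = ∑ i, f i :=
  Equiv.sum_comp Fin.revPerm f

lemma pathD_mulVec_rev {m : ℕ} (y : Fin m → ℝ) (i : Fin m) :
    (pathD m).mulVec y (Fin.rev i) = (pathD m).mulVec (fun j => y (Fin.rev j)) i := by
  unfold mulVec dotProduct
  rw [← sum_rev]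
  simp only [pathD_rev]

lemma pathD_symm {m : ℕ} (y z : Fin m → ℝ) :
    y ⬝ᵥ (pathD m).mulVec z = z ⬝ᵥ (pathD m).mulVec y := by
  unfold dotProduct mulVec dotProduct
  simp only [Finset.mul_sum]
  rw [Finset.sum_comm]
  refine Finset.sum_congr rfl (fun i _ => Finset.sum_congr rfl (fun j _ => ?_))
  simp only [pathD, abs_sub_comm (j : ℝ) i]; ring

lemma pathD_neg {m : ℕ} (e : Fin m → ℝ) (he : ∑ i, e i = 0) : e ⬝ᵥ (pathD m).mulVec e ≤ 0 := by
  have hent : ∀ i j : Fin m, pathD m i j =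
      ∑ t : Fin m, ((if t < i then (1 : ℝ) else 0) - (if t < j then 1 else 0)) ^ 2 := by
    have key : ∀ i j : Fin m, i ≤ j → pathD m i j =
      ∑ t : Fin m, ((if t < i then (1 : ℝ) else 0) - (if t < j then 1 else 0)) ^ 2 := by
      intro i j hij
      have h1 : ∀ t : Fin m, ((if t < i then (1 : ℝ) else 0) - (if t < j then 1 else 0)) ^ 2 =
          (if t ∈ Finset.Ico i j then 1 else 0) := by
        intro t
        by_cases h1 : t < i
        · have h2 : t < j := lt_of_lt_of_le h1 hij
          simp [h1, h2, not_le.2 h1]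
        · by_cases h2 : t < j <;> simp [h1, h2, not_lt.1 h1]
      simp only [h1, Finset.sum_ite_mem, Finset.univ_inter, Finset.sum_const, Fin.card_Ico,
        nsmul_eq_mul, mul_one]
      have hij' : (i : ℕ) ≤ j := hij
      rw [Nat.cast_sub hij', pathD, abs_sub_comm, abs_of_nonneg]
      have : (i : ℝ) ≤ j := by exact_mod_cast hij'
      linarith
    intro i j
    rcases le_total i j with h | h
    · exact key i j h
    · have := key j i h
      rw [show pathD m i j = pathD m j i from abs_sub_comm _ _, this]
      exact Finset.sum_congr rfl (fun t _ => by ring)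
  have hexp : e ⬝ᵥ (pathD m).mulVec e =
      ∑ t : Fin m, -2 * (∑ i, e i * (if t < i then (1 : ℝ) else 0)) ^ 2 := by
    unfold dotProduct mulVec dotProduct
    simp only [hent, Finset.sum_mul, Finset.mul_sum]
    have : ∀ i : Fin m, ∑ j : Fin m, ∑ t : Fin m,
        e i * (((if t < i then (1 : ℝ) else 0) - (if t < j then 1 else 0)) ^ 2 * e j) =
        ∑ t : Fin m, ∑ j : Fin m,
        e i * (((if t < i then (1 : ℝ) else 0) - (if t < j then 1 else 0)) ^ 2 * e j) :=
      fun i => Finset.sum_comm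
    simp only [this]
    rw [Finset.sum_comm]
    refine Finset.sum_congr rfl (fun t _ => ?_)
    set c : Fin m → ℝ := fun i => if t < i then (1 : ℝ) else 0 with hc
    change ∑ i, ∑ j, e i * ((c i - c j) ^ 2 * e j) = -2 * (∑ i, e i * c i) ^ 2
    have h1 : ∀ i j, e i * ((c i - c j) ^ 2 * e j) =
        (e i * c i ^ 2) * e j + e i * (e j * c j ^ 2) - 2 * ((e i * c i) * (e j * c j)) := by
      intro i j; ring
    simp only [h1, Finset.sum_add_distrib, Finset.sum_sub_distrib, ← Finset.mul_sum,
      ← Finset.sum_mul, he]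
    ring
  rw [hexp]
  exact Finset.sum_nonpos (fun t _ => by nlinarith [sq_nonneg (∑ i, e i * (if t < i then (1 : ℝ) else 0))])

/-- The antisymmetric vector `u - w`. -/
def fVec (m : ℕ) : Fin m → ℝ := fun i => uVec m i - wVec m i

/-- Lower bound for the top eigenvalue. -/
lemma lam_lower (p m q : ℕ) (hp : 1 ≤ p) (hq : 1 ≤ q) :
    (m + 1) + (∑ i, |fVec m i|) / 2 ≤ maxEig (cpD p m q) := by
  have : Nonempty (Fin p ⊕ Fin m ⊕ Fin q) := ⟨Sum.inl ⟨0, hp⟩⟩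
  have hR := (perron_aux (cpD p m q) (cpD_symm p m q) (cpD_nonneg p m q) (cpD_pos p m q)).2
    (fun _ => 1)
  set F := ∑ i, |fVec m i| with hF
  have hp' : (1 : ℝ) ≤ p := by exact_mod_cast hp
  have hq' : (1 : ℝ) ≤ q := by exact_mod_cast hq
  have hmm : (0 : ℝ) ≤ m := by positivity
  have huw : ∑ i, uVec m i = ∑ i, wVec m i := by
    rw [← sum_rev]; simp only [uVec_rev]
  have hupos : ∀ i, 0 ≤ uVec m i := fun i => by unfold uVec; positivity
  have hwpos : ∀ i, 0 ≤ wVec m i := fun i => by rw [← uVec_rev]; exact hupos _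
  have hFu : F / 2 ≤ ∑ i, uVec m i := by
    have : F ≤ ∑ i, (uVec m i + wVec m i) := by
      refine Finset.sum_le_sum (fun i _ => ?_)
      have := hupos i; have := hwpos i
      unfold fVec
      rw [abs_le]; constructor <;> linarith
    rw [Finset.sum_add_distrib] at this
    linarith
  have hFi : ∀ i, F / 2 ≤ ∑ j, pathD m i j := by
    intro i
    have h1 : F ≤ ∑ j, (pathD m i j + pathD m i (Fin.rev j)) := by
      refine Finset.sum_le_sum (fun j _ => ?_)
      unfold pathD fVec uVec wVec
      rw [rev_cast]
      have := abs_sub (( i : ℝ) - (m - 1 - j)) ((i : ℝ) - j)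
      have h2 : ((i : ℝ) - (m - 1 - j)) - ((i : ℝ) - j) = (j : ℝ) + 1 - (m - j) := by ring
      rw [h2] at this
      linarith
    rw [Finset.sum_add_distrib, sum_rev (fun j => pathD m i j)] at h1
    linarith
  have hrow : ∀ i, (m + 1) + F / 2 ≤ (cpD p m q).mulVec (fun _ => 1) i := by
    intro i
    rcases i with i | i | i
    · rw [cpD_mulVec_left]
      simp only [dotProduct, Finset.sum_const, Finset.card_univ, Fintype.card_fin, nsmul_eq_mul,
        mul_one]
      nlinarith
    · rw [cpD_mulVec_mid]
      have := hFi i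
      simp only [mulVec, dotProduct, Finset.sum_const, Finset.card_univ, Fintype.card_fin,
        nsmul_eq_mul, mul_one]
      have h1 := hupos i
      have h2 := hwpos i
      have h3 : uVec m i + wVec m i = m + 1 := by unfold uVec wVec; ring
      nlinarith
    · rw [cpD_mulVec_right]
      simp only [dotProduct, Finset.sum_const, Finset.card_univ, Fintype.card_fin, nsmul_eq_mul,
        mul_one]
      nlinarith
  have hsum : (fun _ : Fin p ⊕ Fin m ⊕ Fin q => (1 : ℝ)) ⬝ᵥ (fun _ => ((m : ℝ) + 1) + F / 2) ≤
      (fun _ => (1 : ℝ)) ⬝ᵥ (cpD p m q).mulVec (fun _ => 1) := by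
    unfold dotProduct
    exact Finset.sum_le_sum (fun i _ => by have := hrow i; linarith)
  have hcard : (0 : ℝ) < (fun _ : Fin p ⊕ Fin m ⊕ Fin q => (1 : ℝ)) ⬝ᵥ (fun _ => (1 : ℝ)) := by
    unfold dotProduct
    exact Finset.sum_pos (fun _ _ => by norm_num) Finset.univ_nonempty
  have heq : (fun _ : Fin p ⊕ Fin m ⊕ Fin q => (1 : ℝ)) ⬝ᵥ (fun _ => ((m : ℝ) + 1) + F / 2) =
      (((m : ℝ) + 1) + F / 2) * ((fun _ : Fin p ⊕ Fin m ⊕ Fin q => (1 : ℝ)) ⬝ᵥ (fun _ => (1 : ℝ))) := by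
    simp only [dotProduct, Finset.mul_sum, mul_one, one_mul]
  rw [heq] at hsum
  exact le_of_mul_le_mul_right (hsum.trans hR) hcard

lemma f_bound (m : ℕ) (hm : 1 ≤ m) (lam : ℝ) (h : (m + 1) + (∑ i, |fVec m i|) / 2 ≤ lam) :
    fVec m ⬝ᵥ fVec m < 2 * m * lam := by
  have hm' : (1 : ℝ) ≤ m := by exact_mod_cast hm
  have hF : 0 ≤ ∑ i, |fVec m i| := Finset.sum_nonneg (fun _ _ => abs_nonneg _)
  have h1 : fVec m ⬝ᵥ fVec m ≤ m * ∑ i, |fVec m i| := by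
    rw [dotProduct, Finset.mul_sum]
    refine Finset.sum_le_sum (fun i _ => ?_)
    rw [← abs_mul_abs_self]
    refine mul_le_mul_of_nonneg_right ?_ (abs_nonneg _)
    have h3 : (i : ℝ) + 1 ≤ m := by exact_mod_cast i.2
    have h4 : (0 : ℝ) ≤ i := by positivity
    unfold fVec uVec wVec
    rw [abs_le]; constructor <;> linarith
  nlinarith

/-- The purely scalar optimisation step. -/
lemma scalar_step (p q p' q' a b : ℝ) (hq : 0 < q) (hqq : q < q') (hqp : q' ≤ p')
    (hN : p + q = p' + q') (ha : 0 < a) (hb : 0 < b)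
    (hab : (a - b) * (p * a - q * b) < 0) :
    ∃ g h : ℝ, 0 < (g * (p * a) + h * (q * b)) * (g * a + h * b)
      + (g * (q * b) + h * (p * a)) * (g * b + h * a)
      - (g * (p * a) + h * (q * b)) ^ 2 / p' - (g * (q * b) + h * (p * a)) ^ 2 / q' := by
  have hq' : 0 < q' := by linarith
  have hp' : 0 < p' := by linarith
  have hp : p' < p := by linarith
  have hlt : a < b := by
    by_contra hcon
    push Not at hcon
    have : q * b ≤ p * a := by nlinarith
    nlinarith
  have hPQ : q * b < p * a := by nlinarith
  by_cases hc : p * a / p' ≤ q * b / q'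
  · refine ⟨1, 0, ?_⟩
    have hval : (1 * (p * a) + 0 * (q * b)) * (1 * a + 0 * b)
      + (1 * (q * b) + 0 * (p * a)) * (1 * b + 0 * a)
      - (1 * (p * a) + 0 * (q * b)) ^ 2 / p' - (1 * (q * b) + 0 * (p * a)) ^ 2 / q' =
      (p - p') * (b * (q * b / q') - a * (p * a / p')) := by
      have hpe : p = p' + q' - q := by linarith
      subst hpe
      field_simp
      ring
    rw [hval]
    have h1 : 0 < p * a / p' := by
      have : 0 < p * a := by nlinarith
      positivity
    apply mul_pos (by linarith)
    nlinarith
  · push Not at hc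
    rw [div_lt_div_iff₀ hq' hp'] at hc
    set S := p * a + q * b with hS
    set Y := p * a - q * b with hY
    have hYpos : 0 < Y := by rw [hY]; linarith
    have hSpos : 0 < S := by rw [hS]; nlinarith [mul_pos hq hb]
    obtain ⟨θ, hθ⟩ : ∃ θ, θ = S * (p' - q') / ((p' + q') * Y) := ⟨_, rfl⟩
    have hθY : θ * ((p' + q') * Y) = S * (p' - q') := by
      rw [hθ]; field_simp
    have hθ0 : 0 ≤ θ := by
      rw [hθ]; apply div_nonneg
      · exact mul_nonneg hSpos.le (by linarith)
      · positivity
    have hθ1 : θ ≤ 1 := by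
      rw [hθ, div_le_one (by positivity), hS, hY]
      nlinarith
    refine ⟨(1 + θ) / 2, (1 - θ) / 2, ?_⟩
    have hA : (1 + θ) / 2 * (p * a) + (1 - θ) / 2 * (q * b) = p' * (S / (p' + q')) := by
      have : (1 + θ) / 2 * (p * a) + (1 - θ) / 2 * (q * b) = (S + θ * Y) / 2 := by
        rw [hS, hY]; ring
      rw [this]; field_simp; linarith
    have hB : (1 + θ) / 2 * (q * b) + (1 - θ) / 2 * (p * a) = q' * (S / (p' + q')) := by
      have : (1 + θ) / 2 * (q * b) + (1 - θ) / 2 * (p * a) = (S - θ * Y) / 2 := by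
        rw [hS, hY]; ring
      rw [this]; field_simp; linarith
    have hfirst : ((1 + θ) / 2 * (p * a) + (1 - θ) / 2 * (q * b)) * ((1 + θ) / 2 * a + (1 - θ) / 2 * b)
      + ((1 + θ) / 2 * (q * b) + (1 - θ) / 2 * (p * a)) * ((1 + θ) / 2 * b + (1 - θ) / 2 * a) =
      (p * a * a + q * b * b) + (1 - θ ^ 2) / 2 * (-((a - b) * Y)) := by
      rw [hY]; ring
    rw [hfirst, hA, hB]
    have h2 : (p' * (S / (p' + q'))) ^ 2 / p' + (q' * (S / (p' + q'))) ^ 2 / q' = S ^ 2 / (p + q) := by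
      rw [hN]; field_simp
    have h3 : p * a * a + q * b * b - S ^ 2 / (p + q) = p * q * (a - b) ^ 2 / (p + q) := by
      have : p + q ≠ 0 := by linarith
      rw [hS]; field_simp; ring
    have h4 : 0 < p * q * (a - b) ^ 2 / (p + q) := by
      have : 0 < p := by linarith
      have : 0 < (a - b) ^ 2 := by
        have : a - b ≠ 0 := by linarith
        positivity
      positivity
    have h5 : 0 ≤ (1 - θ ^ 2) / 2 * (-((a - b) * Y)) := by
      apply mul_nonneg
      · nlinarith
      · linarith
    linarith

set_option maxHeartbeats 2000000 in
lemma main_sorted (m p q p' q' : ℕ) (hm : 1 ≤ m) (hq : 1 ≤ q) (hqq : q < q') (hqp : q' ≤ p')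
    (hN : p + q = p' + q') : maxEig (cpD p m q) < maxEig (cpD p' m q') := by
  have hp : 1 ≤ p := by omega
  have hp' : 1 ≤ p' := by omega
  have hq' : 1 ≤ q' := by omega
  have : Nonempty (Fin p ⊕ Fin m ⊕ Fin q) := ⟨Sum.inl ⟨0, hp⟩⟩
  have : Nonempty (Fin p' ⊕ Fin m ⊕ Fin q') := ⟨Sum.inl ⟨0, hp'⟩⟩
  obtain ⟨⟨x, hx, hxe⟩, -⟩ :=
    perron_aux (cpD p m q) (cpD_symm p m q) (cpD_nonneg p m q) (cpD_pos p m q)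
  have hR' := (perron_aux (cpD p' m q') (cpD_symm p' m q') (cpD_nonneg p' m q') (cpD_pos p' m q')).2
  have hlow := lam_lower p m q hp hq
  set lam := maxEig (cpD p m q) with hlam
  have hf := f_bound m hm lam hlow
  have hm1 : (1 : ℝ) ≤ m := by exact_mod_cast hm
  have hlpos : 0 < lam := by
    have hF : 0 ≤ ∑ i, |fVec m i| := Finset.sum_nonneg (fun _ _ => abs_nonneg _)
    linarith
  by_contra hcon
  push Not at hcon
  set a := x (Sum.inl ⟨0, hp⟩) with ha
  set b := x (Sum.inr (Sum.inr ⟨0, hq⟩)) with hb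
  set y : Fin m → ℝ := fun j => x (Sum.inr (Sum.inl j)) with hy
  have hapos : 0 < a := hx _
  have hbpos : 0 < b := hx _
  have hxa : ∀ i, x (Sum.inl i) = a := by
    intro i
    have h1 := congrFun hxe (Sum.inl i)
    have h2 := congrFun hxe (Sum.inl ⟨0, hp⟩)
    rw [cpD_mulVec_left, Pi.smul_apply, smul_eq_mul] at h1 h2
    have : (lam + 1) * (x (Sum.inl i) - a) = 0 := by rw [ha]; linarith
    rcases mul_eq_zero.1 this with h | h <;> linarith
  have hxb : ∀ i, x (Sum.inr (Sum.inr i)) = b := by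
    intro i
    have h1 := congrFun hxe (Sum.inr (Sum.inr i))
    have h2 := congrFun hxe (Sum.inr (Sum.inr ⟨0, hq⟩))
    rw [cpD_mulVec_right, Pi.smul_apply, smul_eq_mul] at h1 h2
    have : (lam + 1) * (x (Sum.inr (Sum.inr i)) - b) = 0 := by rw [hb]; linarith
    rcases mul_eq_zero.1 this with h | h <;> linarith
  -- the three families of equations
  have e1 : (lam + 1) * a = p * a + uVec m ⬝ᵥ y + (m + 1) * (q * b) := by
    have h := congrFun hxe (Sum.inl ⟨0, hp⟩)
    rw [cpD_mulVec_left, Pi.smul_apply, smul_eq_mul] at h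
    simp only [hxa, hxb, Finset.sum_const, Finset.card_univ, Fintype.card_fin, nsmul_eq_mul] at h
    linarith
  have e3 : (lam + 1) * b = (m + 1) * (p * a) + wVec m ⬝ᵥ y + q * b := by
    have h := congrFun hxe (Sum.inr (Sum.inr ⟨0, hq⟩))
    rw [cpD_mulVec_right, Pi.smul_apply, smul_eq_mul] at h
    simp only [hxa, hxb, Finset.sum_const, Finset.card_univ, Fintype.card_fin, nsmul_eq_mul] at h
    linarith
  have e2 : ∀ i, (pathD m).mulVec y i = lam * y i - p * a * uVec m i - q * b * wVec m i := by
    intro i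
    have h := congrFun hxe (Sum.inr (Sum.inl i))
    rw [cpD_mulVec_mid, Pi.smul_apply, smul_eq_mul] at h
    simp only [hxa, hxb, Finset.sum_const, Finset.card_univ, Fintype.card_fin, nsmul_eq_mul] at h
    linarith
  set P : ℝ := p * a with hP
  set Q : ℝ := q * b with hQ
  set z : Fin m → ℝ := fun j => y (Fin.rev j) with hz
  have e2' : ∀ i, (pathD m).mulVec z i = lam * z i - P * wVec m i - Q * uVec m i := by
    intro i
    rw [hz, ← pathD_mulVec_rev, e2, uVec_rev, wVec_rev]
  have huz : uVec m ⬝ᵥ z = wVec m ⬝ᵥ y := by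
    unfold dotProduct
    rw [← sum_rev]
    simp [hz, uVec_rev]
  have hwz : wVec m ⬝ᵥ z = uVec m ⬝ᵥ y := by
    unfold dotProduct
    rw [← sum_rev]
    simp [hz, wVec_rev]
  -- sign of (a-b)(P-Q)
  have hsign : (a - b) * (P - Q) < 0 := by
    set e : Fin m → ℝ := y - z with he
    have hesum : ∑ i, e i = 0 := by
      simp only [he, Pi.sub_apply, Finset.sum_sub_distrib, hz]
      rw [sum_rev y]; ring
    have hDe : (pathD m).mulVec e = lam • e - (P - Q) • fVec m := by
      funext i
      rw [he, mulVec_sub, Pi.sub_apply, e2, e2']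
      simp only [Pi.sub_apply, Pi.smul_apply, smul_eq_mul, fVec]
      ring
    have hneg := pathD_neg e hesum
    rw [hDe, dotProduct_sub, dotProduct_smul, dotProduct_smul, smul_eq_mul, smul_eq_mul] at hneg
    have hfe : e ⬝ᵥ fVec m = 2 * (uVec m ⬝ᵥ y - wVec m ⬝ᵥ y) := by
      have : fVec m = uVec m - wVec m := rfl
      rw [this, dotProduct_comm, he, sub_dotProduct, dotProduct_sub, dotProduct_sub, huz, hwz]
      ring
    have hcs : (e ⬝ᵥ fVec m) ^ 2 ≤ (e ⬝ᵥ e) * (fVec m ⬝ᵥ fVec m) := by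
      have := Finset.sum_mul_sq_le_sq_mul_sq Finset.univ e (fVec m)
      simpa [dotProduct, sq] using this
    have hee : 0 ≤ e ⬝ᵥ e := Finset.sum_nonneg (fun i _ => mul_self_nonneg _)
    have hff : 0 ≤ fVec m ⬝ᵥ fVec m := Finset.sum_nonneg (fun i _ => mul_self_nonneg _)
    have hdiff : (lam + 1) * (a - b) = -(m * (P - Q)) + (e ⬝ᵥ fVec m) / 2 := by
      rw [hfe]; linarith
    set E := e ⬝ᵥ e
    set G := fVec m ⬝ᵥ fVec m
    set T := e ⬝ᵥ fVec m
    set Δ := P - Q with hΔ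
    have hΔ0 : Δ ≠ 0 := by
      intro h0
      rw [h0] at hneg hdiff
      have hE : E = 0 := by nlinarith
      have hT : T = 0 := by
        rw [hE, zero_mul] at hcs
        nlinarith
      rw [hT] at hdiff
      have hab : a = b := by
        have : (lam + 1) * (a - b) = 0 := by linarith
        rcases mul_eq_zero.1 this with h | h <;> linarith
      have hpq : (q : ℝ) < p := by
        have : q < p := by omega
        exact_mod_cast this
      rw [hΔ, hP, hQ, hab] at h0
      nlinarith
    have hD2 : 0 < Δ ^ 2 := by positivity
    -- lam * T^2 <= G * (Δ T)
    have hlT : lam * T ^ 2 ≤ G * (Δ * T) := by nlinarith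
    have hDT0 : 0 ≤ Δ * T := by nlinarith
    have hlD : lam * (Δ * T) ≤ G * Δ ^ 2 := by
      by_cases h : Δ * T = 0
      · rw [h]; nlinarith
      · have hpos : 0 < Δ * T := lt_of_le_of_ne hDT0 (Ne.symm h)
        have h1 : (lam * (Δ * T)) * (Δ * T) ≤ (G * Δ ^ 2) * (Δ * T) := by nlinarith
        exact le_of_mul_le_mul_right h1 hpos
    have hlt : lam * (Δ * T) < lam * (2 * m * Δ ^ 2) := by nlinarith
    have hlt2 : Δ * T < 2 * m * Δ ^ 2 := lt_of_mul_lt_mul_left hlt hlpos.le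
    have : (lam + 1) * ((a - b) * Δ) < 0 := by
      have : (lam + 1) * ((a - b) * Δ) = (-(m * Δ) + T / 2) * Δ := by rw [← hdiff]; ring
      rw [this]; nlinarith
    by_contra hc
    push Not at hc
    have := mul_nonneg (by linarith : 0 ≤ lam + 1) hc
    linarith
  obtain ⟨g, h, hgh⟩ := scalar_step p q p' q' a b (by exact_mod_cast hq) (by exact_mod_cast hqq)
    (by exact_mod_cast hqp) (by exact_mod_cast hN) hapos hbpos hsign
  rw [← hP, ← hQ] at hgh
  have hp'0 : (0 : ℝ) < p' := by exact_mod_cast hp'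
  have hq'0 : (0 : ℝ) < q' := by exact_mod_cast hq'
  set P' := g * P + h * Q with hP'
  set Q' := g * Q + h * P with hQ'
  set y' : Fin m → ℝ := g • y + h • z with hy'
  have hray := hR' (Sum.elim (fun _ => P' / p') (Sum.elim y' (fun _ => Q' / q')))
  rw [cpD_quad, cpD_self] at hray
  have hc1 : (p' : ℝ) * (P' / p') = P' := by field_simp
  have hc2 : (q' : ℝ) * (Q' / q') = Q' := by field_simp
  rw [hc1, hc2] at hray
  have hnn : 0 ≤ P' * (P' / p') + y' ⬝ᵥ y' + Q' * (Q' / q') := by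
    have h1 : 0 ≤ y' ⬝ᵥ y' := Finset.sum_nonneg (fun i _ => mul_self_nonneg _)
    have h2 : P' * (P' / p') = P' ^ 2 / p' := by ring
    have h3 : Q' * (Q' / q') = Q' ^ 2 / q' := by ring
    rw [h2, h3]; positivity
  have hray2 := hray.trans (mul_le_mul_of_nonneg_right hcon hnn)
  have hDy' : (pathD m).mulVec y' = lam • y' - P' • uVec m - Q' • wVec m := by
    funext i
    rw [hy', mulVec_add, mulVec_smul, mulVec_smul]
    simp only [Pi.add_apply, Pi.sub_apply, Pi.smul_apply, smul_eq_mul, e2, e2', hP', hQ']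
    ring
  have huy' : uVec m ⬝ᵥ y' = g * (uVec m ⬝ᵥ y) + h * (wVec m ⬝ᵥ y) := by
    rw [hy', dotProduct_add, dotProduct_smul, dotProduct_smul, huz]; rfl
  have hwy' : wVec m ⬝ᵥ y' = g * (wVec m ⬝ᵥ y) + h * (uVec m ⬝ᵥ y) := by
    rw [hy', dotProduct_add, dotProduct_smul, dotProduct_smul, hwz]; rfl
  rw [hDy', dotProduct_sub, dotProduct_sub, dotProduct_smul, dotProduct_smul, dotProduct_smul,
    smul_eq_mul, smul_eq_mul, smul_eq_mul, dotProduct_comm y' (uVec m), dotProduct_comm y' (wVec m)]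
    at hray2
  have k1 : P' + uVec m ⬝ᵥ y' + (m + 1) * Q' = (lam + 1) * (g * a + h * b) := by
    rw [huy', hP', hQ']; linear_combination (-g) * e1 - h * e3
  have k2 : (m + 1) * P' + wVec m ⬝ᵥ y' + Q' = (lam + 1) * (g * b + h * a) := by
    rw [hwy', hP', hQ']; linear_combination (-g) * e3 - h * e1
  have hfin : (lam + 1) * (P' * (g * a + h * b) + Q' * (g * b + h * a) - P' ^ 2 / p' - Q' ^ 2 / q')
      ≤ 0 := by
    have : (lam + 1) * (P' * (g * a + h * b) + Q' * (g * b + h * a) - P' ^ 2 / p' - Q' ^ 2 / q') =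
      P' * (P' + uVec m ⬝ᵥ y' + (m + 1) * Q') + Q' * ((m + 1) * P' + wVec m ⬝ᵥ y' + Q')
        - (lam + 1) * (P' * (P' / p')) - (lam + 1) * (Q' * (Q' / q')) := by
      rw [k1, k2]; ring
    rw [this]
    linarith
  have := mul_pos (by linarith : 0 < lam + 1) hgh
  linarith

lemma maxEig_reindex {ι κ : Type} [Fintype ι] [Fintype κ] (e : ι ≃ κ) (A : Matrix ι ι ℝ)
    (B : Matrix κ κ ℝ) (h : ∀ i j, A i j = B (e i) (e j)) : maxEig A = maxEig B := by
  have hA : ∀ (v : κ → ℝ) i, A.mulVec (fun j => v (e j)) i = B.mulVec v (e i) := by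
    intro v i
    simp only [mulVec, dotProduct, h]
    exact Equiv.sum_comp e (fun j => B (e i) j * v j)
  unfold maxEig
  congr 1
  ext μ
  constructor
  · rintro ⟨v, hv, hve⟩
    refine ⟨fun j => v (e.symm j), ?_, ?_⟩
    · intro h0; apply hv; funext i
      have := congrFun h0 (e i)
      simpa using this
    · funext j
      have h1 := hA (fun j => v (e.symm j)) (e.symm j)
      simp only [Equiv.symm_apply_apply, Equiv.apply_symm_apply] at h1
      rw [← h1]
      exact congrFun hve (e.symm j)
  · rintro ⟨v, hv, hve⟩
    refine ⟨fun i => v (e i), ?_, ?_⟩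
    · intro h0; apply hv; funext j
      have := congrFun h0 (e.symm j)
      simpa using this
    · funext i
      rw [hA]
      exact congrFun hve (e i)

/-- Reversal of the clique path. -/
def revEquiv (p m q : ℕ) : (Fin p ⊕ Fin m ⊕ Fin q) ≃ (Fin q ⊕ Fin m ⊕ Fin p) where
  toFun := Sum.elim (fun i => Sum.inr (Sum.inr i))
    (Sum.elim (fun i => Sum.inr (Sum.inl (Fin.rev i))) (fun i => Sum.inl i))
  invFun := Sum.elim (fun i => Sum.inr (Sum.inr i))
    (Sum.elim (fun i => Sum.inr (Sum.inl (Fin.rev i))) (fun i => Sum.inl i))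
  left_inv := by rintro (i | i | i) <;> simp
  right_inv := by rintro (i | i | i) <;> simp

lemma maxEig_swap (p m q : ℕ) : maxEig (cpD p m q) = maxEig (cpD q m p) := by
  refine maxEig_reindex (revEquiv p m q) _ _ ?_
  rintro (i | i | i) (j | j | j)
  · rfl
  · exact (wVec_rev j).symm
  · rfl
  · exact (wVec_rev i).symm
  · exact (pathD_rev i j).symm
  · exact (uVec_rev i).symm
  · rfl
  · exact (uVec_rev j).symm
  · rfl

/-- Among clique paths `ℙ_{n1+1,2,…,2,n2+1}` with `k` cliques and fixed `n1 + n2`,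
making the two end cliques more balanced strictly increases the distance spectral radius. -/
theorem maxEig_cliquePathD_strict_mono
    (k n1 n2 n1' n2' : ℕ) (hk : 2 ≤ k)
    (hn1 : 1 ≤ n1) (hn2 : 1 ≤ n2) (hn1' : 1 ≤ n1') (hn2' : 1 ≤ n2')
    (hsum : n1 + n2 = n1' + n2') (hmax : max n1 n2 < max n1' n2') :
    maxEig (cliquePathD n1' k n2') < maxEig (cliquePathD n1 k n2) := by
  obtain ⟨m, rfl⟩ : ∃ m, k = m + 1 := ⟨k - 1, by omega⟩
  change maxEig (cpD n1' m n2') < maxEig (cpD n1 m n2)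
  have hm : 1 ≤ m := by omega
  rcases le_total n2' n1' with h' | h' <;> rcases le_total n2 n1 with h | h
  · exact main_sorted m _ _ _ _ hm hn2' (by omega) h (by omega)
  · rw [maxEig_swap n1 m n2]
    exact main_sorted m _ _ _ _ hm hn2' (by omega) h (by omega)
  · rw [maxEig_swap n1' m n2']
    exact main_sorted m _ _ _ _ hm hn1' (by omega) h (by omega)
  · rw [maxEig_swap n1' m n2', maxEig_swap n1 m n2]
    exact main_sorted m _ _ _ _ hm hn1' (by omega) h (by omega)
end
end

section
/- Let k ≥ 2 and let s ≥ 2 be an integer. Among all pairs of positive integers n1, n2 with n1 + n2 = s, the largest eigenvalue λ(D(n1,k,n2)) is maximized when {n1, n2} = {⌊s/2⌋, ⌈s/2⌉}; that is, for all positive integers n1, n2 with n1 + n2 = s, λ(D(⌊s/2⌋,k,⌈s/2⌉)) ≥ λ(D(n1,k,n2)). -/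
open Matrix

noncomputable section

theorem aux_herm {ι : Type} [Fintype ι] [DecidableEq ι] [Nonempty ι] (A : Matrix ι ι ℝ)
    (hA : A.IsHermitian) :
    (∃ v : ι → ℝ, v ≠ 0 ∧ A.mulVec v = maxEig A • v) ∧
    ∀ v : ι → ℝ, v ⬝ᵥ (A *ᵥ v) ≤ maxEig A * (v ⬝ᵥ v) := by
  have hfin : {μ : ℝ | ∃ v : ι → ℝ, v ≠ 0 ∧ A.mulVec v = μ • v}.Finite := by
    refine (Module.End.finite_hasEigenvalue (Matrix.toLin' A)).subset ?_
    rintro μ ⟨v, hv, h⟩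
    exact Module.End.hasEigenvalue_of_hasEigenvector (x := v)
      ⟨Module.End.mem_eigenspace_iff.2 (by simpa using h), hv⟩
  have hev : ∀ (B : Matrix ι ι ℝ) (hB : B.IsHermitian) (i : ι),
      ∃ v : ι → ℝ, v ≠ 0 ∧ B.mulVec v = hB.eigenvalues i • v := by
    intro B hB i
    refine ⟨_, ?_, hB.mulVec_eigenvectorBasis i⟩
    intro h
    have := hB.eigenvectorBasis.orthonormal.ne_zero i
    apply this
    ext j
    exact congrFun h j
  have hne : {μ : ℝ | ∃ v : ι → ℝ, v ≠ 0 ∧ A.mulVec v = μ • v}.Nonempty :=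
    ⟨_, hev A hA (Classical.arbitrary ι)⟩
  refine ⟨hne.csSup_mem hfin, fun v => ?_⟩
  have hB : (maxEig A • (1 : Matrix ι ι ℝ) - A).IsHermitian := by
    have h1 : (maxEig A • (1 : Matrix ι ι ℝ)).IsHermitian := by
      ext i j
      simp [Matrix.one_apply, eq_comm]
    exact h1.sub hA
  have hps : (maxEig A • (1 : Matrix ι ι ℝ) - A).PosSemidef := by
    rw [hB.posSemidef_iff_eigenvalues_nonneg]
    intro i
    obtain ⟨w, hw, h⟩ := hev _ hB i
    have h2 : A.mulVec w = (maxEig A - hB.eigenvalues i) • w := by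
      rw [Matrix.sub_mulVec, Matrix.smul_mulVec, Matrix.one_mulVec] at h
      rw [sub_smul, ← h]; abel
    have h3 : maxEig A - hB.eigenvalues i ≤ maxEig A := le_csSup hfin.bddAbove ⟨w, hw, h2⟩
    simp only [Pi.zero_apply]
    linarith
  have := hps.dotProduct_mulVec_nonneg v
  rw [Matrix.sub_mulVec, Matrix.smul_mulVec, Matrix.one_mulVec] at this
  simp only [star_trivial, dotProduct_sub, dotProduct_smul, smul_eq_mul] at this
  linarith

theorem aux_pen (a b c d L R r : ℝ) (ha : 0 < a) (hb : 0 < b) (hc : 0 < c) (hd : 0 < d)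
    (hs : c + d = a + b) (hr : r * (a - b) = c - d) (hr1 : r ^ 2 ≤ 1) :
    ((1 + r) / 2 * L + (1 - r) / 2 * R) ^ 2 / c + ((1 - r) / 2 * L + (1 + r) / 2 * R) ^ 2 / d
      ≤ L ^ 2 / a + R ^ 2 / b := by
  have key : ∀ a b L R : ℝ, 0 < a → 0 < b → L ^ 2 / a + R ^ 2 / b =
      (L + R) ^ 2 / (a + b) + (L * b - R * a) ^ 2 / (a * b * (a + b)) := by
    intro a b L R ha hb
    have : a + b ≠ 0 := by positivity
    field_simp
    ring
  rw [key c d _ _ hc hd, key a b L R ha hb, hs]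
  have e1 : ((1 + r) / 2 * L + (1 - r) / 2 * R) + ((1 - r) / 2 * L + (1 + r) / 2 * R) = L + R := by
    ring
  have e2 : ((1 + r) / 2 * L + (1 - r) / 2 * R) * d - ((1 - r) / 2 * L + (1 + r) / 2 * R) * c
      = r * (L * b - R * a) := by
    have hc' : c = (a + b + r * (a - b)) / 2 := by linarith
    have hd' : d = (a + b - r * (a - b)) / 2 := by linarith
    rw [hc', hd']; ring
  rw [e1, e2]
  have hab : a * b ≤ c * d := by
    have h1 : (c - d) ^ 2 ≤ (a - b) ^ 2 := by
      rw [← hr, mul_pow]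
      nlinarith [sq_nonneg (a - b)]
    have h2 : (c + d) ^ 2 = (a + b) ^ 2 := by rw [hs]
    nlinarith
  have hq : (r * (L * b - R * a)) ^ 2 ≤ (L * b - R * a) ^ 2 := by
    rw [mul_pow]
    nlinarith [sq_nonneg (L * b - R * a)]
  gcongr

theorem aux_abs (m : ℕ) (i j : Fin m) :
    |(i : ℝ) - (j : ℝ)| = ∑ c : Fin m,
      ((if i ≤ c then (1 : ℝ) else 0) - (if j ≤ c then (1 : ℝ) else 0)) ^ 2 := by
  wlog h : i ≤ j generalizing i j
  · rw [abs_sub_comm, this j i (le_of_not_ge h)]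
    refine Finset.sum_congr rfl fun c _ => by ring
  have h1 : ∀ c : Fin m, ((if i ≤ c then (1 : ℝ) else 0) - (if j ≤ c then (1 : ℝ) else 0)) ^ 2
      = if c ∈ Finset.Ico i j then 1 else 0 := by
    intro c
    simp only [Finset.mem_Ico]
    split_ifs <;> first | (exfalso; omega) | norm_num
  simp only [h1]
  rw [Finset.sum_ite_mem]
  simp only [Finset.univ_inter, Finset.sum_const, Fin.card_Ico, nsmul_eq_mul, mul_one]
  have h' : (i : ℕ) ≤ j := h
  rw [Nat.cast_sub h', abs_sub_comm, abs_of_nonneg]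
  have : (i : ℝ) ≤ j := by exact_mod_cast h'
  linarith

theorem aux_neg (m : ℕ) (y : Fin m → ℝ) (hy : ∑ i, y i = 0) :
    y ⬝ᵥ (pathD m *ᵥ y) ≤ 0 := by
  have h : y ⬝ᵥ (pathD m *ᵥ y) =
      ∑ c : Fin m, (-2) * (∑ i, (if i ≤ c then (1 : ℝ) else 0) * y i) ^ 2 := by
    simp only [dotProduct, mulVec, pathD, aux_abs]
    simp only [Finset.sum_mul, Finset.mul_sum]
    rw [Finset.sum_congr rfl (fun i _ => Finset.sum_comm), Finset.sum_comm]
    refine Finset.sum_congr rfl fun c _ => ?_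
    set p : Fin m → ℝ := fun i => if i ≤ c then (1 : ℝ) else 0 with hp
    have : ∀ i j, y i * (((if i ≤ c then (1 : ℝ) else 0) - (if j ≤ c then (1 : ℝ) else 0)) ^ 2 * y j)
        = (p i ^ 2 * y i) * y j + y i * (p j ^ 2 * y j) - 2 * ((p i * y i) * (p j * y j)) := by
      intro i j; simp only [hp]; ring
    simp only [this, Finset.sum_add_distrib, Finset.sum_sub_distrib, ← Finset.mul_sum,
      ← Finset.sum_mul, hy]
    ring
  rw [h]
  refine Finset.sum_nonpos fun c _ => ?_
  nlinarith [sq_nonneg (∑ i, (if i ≤ c then (1 : ℝ) else 0) * y i)]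

theorem aux_sumD (m : ℕ) : ∑ i : Fin m, ∑ j : Fin m, |(i : ℝ) - (j : ℝ)| = m * (m ^ 2 - 1) / 3 := by
  have h0 : ∀ m : ℕ, ∀ M : ℝ, ∑ i ∈ Finset.range m, (M - (i : ℝ)) = m * M - m * (m - 1) / 2 := by
    intro m M
    induction m with
    | zero => simp
    | succ n ih => rw [Finset.sum_range_succ, ih]; push_cast; ring
  have e : ∀ m : ℕ, ∑ i ∈ Finset.range m, ∑ j ∈ Finset.range m, |(i : ℝ) - (j : ℝ)|
      = m * (m ^ 2 - 1) / 3 := by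
    intro m
    induction m with
    | zero => simp
    | succ n ih =>
      have a1 : ∑ i ∈ Finset.range n, |(i : ℝ) - (n : ℝ)| = n * n - n * (n - 1) / 2 := by
        rw [← h0]
        refine Finset.sum_congr rfl fun i hi => ?_
        have : (i : ℝ) ≤ n := by exact_mod_cast (Finset.mem_range.1 hi).le
        rw [abs_sub_comm, abs_of_nonneg]; linarith
      have a2 : ∑ i ∈ Finset.range n, |(n : ℝ) - (i : ℝ)| = n * n - n * (n - 1) / 2 := by
        rw [← a1]
        exact Finset.sum_congr rfl fun i _ => abs_sub_comm _ _
      simp only [Finset.sum_range_succ, Finset.sum_add_distrib]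
      rw [ih, a1, a2]
      push_cast
      simp
      ring
  rw [← e m, ← Fin.sum_univ_eq_sum_range (fun i => ∑ j ∈ Finset.range m, |(i : ℝ) - (j : ℝ)|)]
  refine Finset.sum_congr rfl fun i _ => ?_
  rw [← Fin.sum_univ_eq_sum_range (fun j => |((i : ℕ) : ℝ) - (j : ℝ)|)]

theorem aux_sumG (m : ℕ) : ∑ i : Fin m, (uVec m i - wVec m i) ^ 2 = m * (m ^ 2 - 1) / 3 := by
  have h : ∀ (n : ℕ) (M : ℝ), ∑ i ∈ Finset.range n, ((i : ℝ) + 1 - (M - i)) ^ 2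
      = 4 * ((n - 1) * n * (2 * n - 1) / 6) + 2 * (1 - M) * (n * (n - 1)) + n * (1 - M) ^ 2 := by
    intro n M
    induction n with
    | zero => simp
    | succ n ih => rw [Finset.sum_range_succ, ih]; push_cast; ring
  simp only [uVec, wVec]
  rw [Fin.sum_univ_eq_sum_range (fun i => ((i : ℝ) + 1 - (m - (i : ℝ))) ^ 2), h]
  ring

/-- The antisymmetric part of the form is nonpositive. -/
theorem aux_anti (m : ℕ) (hm : 1 ≤ m) (y : Fin m → ℝ) (hy : ∑ i, y i = 0) (l T : ℝ)
    (hl : ((m : ℝ) ^ 2 - 1) / 3 ≤ l) (hl0 : 0 ≤ l) :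
    y ⬝ᵥ (pathD m *ᵥ y) + T * ∑ i, (uVec m i - wVec m i) * y i - l * (y ⬝ᵥ y)
      - m / 2 * T ^ 2 ≤ 0 := by
  have h1 := aux_neg m y hy
  have h2 := Finset.sum_mul_sq_le_sq_mul_sq Finset.univ (fun i => uVec m i - wVec m i) y
  rw [aux_sumG] at h2
  set X := ∑ i, (uVec m i - wVec m i) * y i
  have h3 : y ⬝ᵥ y = ∑ i, y i ^ 2 := by simp [dotProduct, sq]
  rw [h3]
  set N := ∑ i, y i ^ 2
  have hN : 0 ≤ N := Finset.sum_nonneg fun i _ => sq_nonneg _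
  have hm' : (1 : ℝ) ≤ m := by exact_mod_cast hm
  have h4 : X ^ 2 ≤ 2 * m * (l * N) := by
    have : (m : ℝ) * (m ^ 2 - 1) / 3 * N ≤ m * l * N := by
      gcongr
      nlinarith
    have : 0 ≤ m * l * N := by positivity
    nlinarith
  have h5 : 0 ≤ 2 * m * (m / 2 * T ^ 2 - T * X + l * N) := by
    nlinarith [sq_nonneg (m * T - X)]
  have h6 : 0 ≤ m / 2 * T ^ 2 - T * X + l * N :=
    nonneg_of_mul_nonneg_right h5 (by positivity)
  linarith

theorem aux_qf0 (n1 k n2 : ℕ) (a : Fin n1 → ℝ) (x : Fin (k - 1) → ℝ) (b : Fin n2 → ℝ) :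
    (Sum.elim a (Sum.elim x b)) ⬝ᵥ (cliquePathD n1 k n2 *ᵥ (Sum.elim a (Sum.elim x b))) =
      (∑ i, a i) ^ 2 - ∑ i, a i ^ 2 + ((∑ i, b i) ^ 2 - ∑ i, b i ^ 2)
      + 2 * (k : ℝ) * (∑ i, a i) * (∑ i, b i)
      + 2 * (∑ i, a i) * (∑ i, uVec (k - 1) i * x i) + 2 * (∑ i, b i) * (∑ i, wVec (k - 1) i * x i)
      + x ⬝ᵥ (pathD (k - 1) *ᵥ x) := by
  have hJ : ∀ (n : ℕ) (a : Fin n → ℝ) (i : Fin n),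
      ∑ j, (if i = j then (0 : ℝ) else 1) * a j = (∑ j, a j) - a i := by
    intro n a i
    have : ∀ j, (if i = j then (0 : ℝ) else 1) * a j = a j - if i = j then a j else 0 := by
      intro j; split_ifs <;> ring
    simp only [this, Finset.sum_sub_distrib]
    simp
  simp only [dotProduct, mulVec, cliquePathD, Fintype.sum_sum_type, Sum.elim_inl, Sum.elim_inr,
    hJ]
  simp only [← Finset.sum_mul, ← Finset.mul_sum, mul_add, mul_sub, Finset.sum_add_distrib,
    Finset.sum_sub_distrib]
  have hu : ∑ i, x i * (uVec (k - 1) i * ∑ j, a j) = (∑ i, a i) * (∑ i, uVec (k - 1) i * x i) := by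
    rw [Finset.mul_sum]; exact Finset.sum_congr rfl fun i _ => by ring
  have hw : ∑ i, x i * (wVec (k - 1) i * ∑ j, b j) = (∑ i, b i) * (∑ i, wVec (k - 1) i * x i) := by
    rw [Finset.mul_sum]; exact Finset.sum_congr rfl fun i _ => by ring
  rw [hu, hw]
  simp only [sq]
  ring

theorem aux_qf (n1 m n2 : ℕ) (a : Fin n1 → ℝ) (x : Fin m → ℝ) (b : Fin n2 → ℝ) :
    (Sum.elim a (Sum.elim x b)) ⬝ᵥ (cliquePathD n1 (m + 1) n2 *ᵥ (Sum.elim a (Sum.elim x b))) =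
      (∑ i, a i) ^ 2 - ∑ i, a i ^ 2 + ((∑ i, b i) ^ 2 - ∑ i, b i ^ 2)
      + 2 * (m + 1) * (∑ i, a i) * (∑ i, b i)
      + 2 * (∑ i, a i) * (∑ i, uVec m i * x i) + 2 * (∑ i, b i) * (∑ i, wVec m i * x i)
      + x ⬝ᵥ (pathD m *ᵥ x) := by
  have h := aux_qf0 n1 (m + 1) n2 a x b
  push_cast at h
  exact h

theorem aux_isHerm (n1 k n2 : ℕ) : (cliquePathD n1 k n2).IsHermitian := by
  ext p q
  rcases p with i | i | i <;> rcases q with j | j | j <;>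
    simp [cliquePathD, Matrix.conjTranspose_apply, eq_comm, pathD, abs_sub_comm]

theorem aux_nonneg (n1 k n2 : ℕ) (p q) : 0 ≤ cliquePathD n1 k n2 p q := by
  have hw : ∀ i : Fin (k - 1), 0 ≤ wVec (k - 1) i := by
    intro i
    have : (i : ℝ) ≤ ((k - 1 : ℕ) : ℝ) := by exact_mod_cast i.2.le
    simp only [wVec]; linarith
  have hu : ∀ i : Fin (k - 1), 0 ≤ uVec (k - 1) i := by
    intro i; simp only [uVec]; positivity
  rcases p with i | i | i <;> rcases q with j | j | j <;> simp only [cliquePathD]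
  all_goals first | exact hw _ | exact hu _ | positivity | skip
  exact abs_nonneg _

theorem aux_dot (n1 m n2 : ℕ) (a : Fin n1 → ℝ) (x : Fin m → ℝ) (b : Fin n2 → ℝ) :
    (Sum.elim a (Sum.elim x b)) ⬝ᵥ (Sum.elim a (Sum.elim x b)) =
      ∑ i, a i ^ 2 + x ⬝ᵥ x + ∑ i, b i ^ 2 := by
  simp only [dotProduct, Fintype.sum_sum_type, Sum.elim_inl, Sum.elim_inr, sq]
  ring

/-- facts about the reversed vector -/
theorem aux_rev (m : ℕ) (x : Fin m → ℝ) :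
    (∑ i, uVec m i * x i.rev = ∑ i, wVec m i * x i) ∧
    (∑ i, wVec m i * x i.rev = ∑ i, uVec m i * x i) ∧
    (∑ i : Fin m, x i.rev = ∑ i, x i) ∧
    ((fun i : Fin m => x i.rev) ⬝ᵥ (fun i : Fin m => x i.rev) = x ⬝ᵥ x) ∧
    ((fun i : Fin m => x i.rev) ⬝ᵥ (pathD m *ᵥ (fun i : Fin m => x i.rev)) = x ⬝ᵥ (pathD m *ᵥ x)) := by
  have key : ∀ f : Fin m → ℝ, ∑ i : Fin m, f i.rev = ∑ i, f i :=
    fun f => Equiv.sum_comp Fin.revPerm f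
  have hc : ∀ i : Fin m, ((i.rev : ℕ) : ℝ) = m - 1 - i := by
    intro i
    rw [Fin.val_rev, Nat.cast_sub (by omega)]
    push_cast; ring
  have hu : ∀ i : Fin m, wVec m i.rev = uVec m i := by
    intro i; simp only [uVec, wVec, hc]; ring
  have hw : ∀ i : Fin m, uVec m i.rev = wVec m i := by
    intro i; simp only [uVec, wVec, hc]; ring
  refine ⟨?_, ?_, key x, ?_, ?_⟩
  · rw [← key (fun i => wVec m i * x i)]; simp only [hu]
  · rw [← key (fun i => uVec m i * x i)]; simp only [hw]
  · exact key (fun i => x i * x i)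
  · simp only [dotProduct, mulVec]
    rw [← key (fun i => x i * ∑ j, pathD m i j * x j)]
    refine Finset.sum_congr rfl fun i _ => ?_
    rw [← key (fun j => pathD m i.rev j * x j)]
    congr 1
    refine Finset.sum_congr rfl fun j _ => ?_
    congr 1
    simp only [pathD, hc]
    rw [abs_sub_comm]
    congr 1
    ring

theorem aux_low (n1 m n2 : ℕ) (hm : 1 ≤ m) :
    ((m : ℝ) ^ 2 - 1) / 3 ≤ maxEig (cliquePathD n1 (m + 1) n2) := by
  have : Nonempty (Fin n1 ⊕ Fin (m + 1 - 1) ⊕ Fin n2) := ⟨Sum.inr (Sum.inl ⟨0, by omega⟩)⟩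
  have h := (aux_herm _ (aux_isHerm n1 (m + 1) n2)).2
    (Sum.elim (fun _ => 0) (Sum.elim (fun _ : Fin m => (1 : ℝ)) (fun _ => 0)))
  have e := aux_qf n1 m n2 (fun _ => 0) (fun _ : Fin m => (1 : ℝ)) (fun _ => 0)
  have e2 := aux_dot n1 m n2 (fun _ => 0) (fun _ : Fin m => (1 : ℝ)) (fun _ => 0)
  have e3 : (fun _ : Fin m => (1 : ℝ)) ⬝ᵥ (pathD m *ᵥ (fun _ : Fin m => (1 : ℝ)))
      = m * (m ^ 2 - 1) / 3 := by
    rw [← aux_sumD]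
    simp [dotProduct, mulVec, pathD]
  have e4 : (fun _ : Fin m => (1 : ℝ)) ⬝ᵥ (fun _ : Fin m => (1 : ℝ)) = m := by
    simp [dotProduct]
  rw [e3] at e
  rw [e4] at e2
  simp only [Finset.sum_const_zero, ne_eq, OfNat.ofNat_ne_zero, not_false_eq_true, zero_pow,
    mul_zero, zero_mul, add_zero, zero_add, sub_zero] at e e2
  have h' := (e.symm.le.trans h).trans_eq (congrArg _ e2)
  have hm' : (0 : ℝ) < m := by exact_mod_cast hm
  refine le_of_mul_le_mul_right ?_ hm'
  linarith

set_option maxHeartbeats 1600000 in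
theorem aux_core (m n1 n2 c d : ℕ) (hm : 1 ≤ m) (h1 : 1 ≤ n1) (h2 : 1 ≤ n2) (hc : 1 ≤ c)
    (hd : 1 ≤ d) (r : ℝ) (hs : (c : ℝ) + d = n1 + n2) (hr : r * ((n1 : ℝ) - n2) = c - d)
    (hr1 : r ^ 2 ≤ 1) :
    maxEig (cliquePathD n1 (m + 1) n2) ≤ maxEig (cliquePathD c (m + 1) d) := by
  have : Nonempty (Fin n1 ⊕ Fin (m + 1 - 1) ⊕ Fin n2) := ⟨Sum.inl ⟨0, by omega⟩⟩
  have : Nonempty (Fin c ⊕ Fin (m + 1 - 1) ⊕ Fin d) := ⟨Sum.inl ⟨0, by omega⟩⟩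
  have hlow := aux_low n1 m n2 hm
  have hm' : (1 : ℝ) ≤ m := by exact_mod_cast hm
  obtain ⟨v0, hv0, hev⟩ := (aux_herm _ (aux_isHerm n1 (m + 1) n2)).1
  have hray := (aux_herm _ (aux_isHerm c (m + 1) d)).2
  set l := maxEig (cliquePathD n1 (m + 1) n2) with hl
  set l' := maxEig (cliquePathD c (m + 1) d) with hl'
  have hl0 : 0 ≤ l := by nlinarith
  -- pass to absolute values
  obtain ⟨a, x, b, ha, hx, hb, hne, hQ⟩ : ∃ (a : Fin n1 → ℝ) (x : Fin m → ℝ) (b : Fin n2 → ℝ),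
      (∀ i, 0 ≤ a i) ∧ (∀ i, 0 ≤ x i) ∧ (∀ i, 0 ≤ b i) ∧
      ¬ ((∀ i, a i = 0) ∧ (∀ i, x i = 0) ∧ (∀ i, b i = 0)) ∧
      l * (Sum.elim a (Sum.elim x b) ⬝ᵥ Sum.elim a (Sum.elim x b)) ≤
        Sum.elim a (Sum.elim x b) ⬝ᵥ
          (cliquePathD n1 (m + 1) n2 *ᵥ (Sum.elim a (Sum.elim x b))) := by
    refine ⟨fun i => |v0 (Sum.inl i)|, fun i => |v0 (Sum.inr (Sum.inl i))|,
      fun i => |v0 (Sum.inr (Sum.inr i))|, fun _ => abs_nonneg _, fun _ => abs_nonneg _,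
      fun _ => abs_nonneg _, ?_, ?_⟩
    · rintro ⟨q1, q2, q3⟩
      apply hv0
      ext p
      rcases p with i | i | i
      · simpa using q1 i
      · simpa using q2 i
      · simpa using q3 i
    · have e : (Sum.elim (fun i => |v0 (Sum.inl i)|) (Sum.elim
          (fun i : Fin m => |v0 (Sum.inr (Sum.inl i))|) (fun i => |v0 (Sum.inr (Sum.inr i))|)))
          = fun p => |v0 p| := by
        ext p
        rcases p with i | i | i <;> rfl
      rw [e]
      have e1 : (fun p => |v0 p|) ⬝ᵥ (fun p => |v0 p|) = v0 ⬝ᵥ v0 := by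
        simp [dotProduct]
      have e2 : l * (v0 ⬝ᵥ v0) = v0 ⬝ᵥ (cliquePathD n1 (m + 1) n2 *ᵥ v0) := by
        rw [hev, dotProduct_smul, smul_eq_mul]
      refine (congrArg (l * ·) e1).le.trans (e2.le.trans ?_)
      simp only [dotProduct, mulVec, Finset.mul_sum]
      refine Finset.sum_le_sum fun p _ => Finset.sum_le_sum fun q _ => ?_
      have hp := aux_nonneg n1 (m + 1) n2 p q
      calc v0 p * (cliquePathD n1 (m + 1) n2 p q * v0 q)
          ≤ |v0 p * (cliquePathD n1 (m + 1) n2 p q * v0 q)| := le_abs_self _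
        _ = _ := by rw [abs_mul, abs_mul, abs_of_nonneg hp]
  have hQ2 := (congrArg (l * ·) (aux_dot n1 m n2 a x b)).symm.le.trans
    (hQ.trans_eq (aux_qf n1 m n2 a x b))
  obtain ⟨r1, r2, r3, r4, r5⟩ := aux_rev m x
  set y : Fin m → ℝ := fun i => x i.rev with hy
  set L := ∑ i, a i with hL
  set R := ∑ i, b i with hR
  set U := ∑ i, uVec m i * x i with hU
  set W := ∑ i, wVec m i * x i with hW
  have n1p : (0 : ℝ) < n1 := by exact_mod_cast h1
  have n2p : (0 : ℝ) < n2 := by exact_mod_cast h2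
  have cp : (0 : ℝ) < c := by exact_mod_cast hc
  have dp : (0 : ℝ) < d := by exact_mod_cast hd
  have hCa : L ^ 2 / n1 ≤ ∑ i, a i ^ 2 := by
    have := sq_sum_le_card_mul_sum_sq (s := Finset.univ) (f := a)
    simp only [Finset.card_univ, Fintype.card_fin] at this
    rw [div_le_iff₀ n1p]; linarith
  have hCb : R ^ 2 / n2 ≤ ∑ i, b i ^ 2 := by
    have := sq_sum_le_card_mul_sum_sq (s := Finset.univ) (f := b)
    simp only [Finset.card_univ, Fintype.card_fin] at this
    rw [div_le_iff₀ n2p]; linarith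
  have hpen := aux_pen n1 n2 c d L R r n1p n2p cp dp hs hr hr1
  set L' := (1 + r) / 2 * L + (1 - r) / 2 * R with hL'
  set R' := (1 - r) / 2 * L + (1 + r) / 2 * R with hR'
  set z : Fin m → ℝ := ((1 + r) / 2) • x + ((1 - r) / 2) • y with hz
  set t : Fin m → ℝ := (1 / 2 : ℝ) • x - (1 / 2 : ℝ) • y with ht
  have hDsymm : y ⬝ᵥ (pathD m *ᵥ x) = x ⬝ᵥ (pathD m *ᵥ y) := by
    have hT : (pathD m)ᵀ = pathD m := by
      ext i j; simp [pathD, abs_sub_comm]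
    rw [dotProduct_mulVec, ← mulVec_transpose, hT, dotProduct_comm]
  have hxy : y ⬝ᵥ x = x ⬝ᵥ y := dotProduct_comm _ _
  have zE : z ⬝ᵥ (pathD m *ᵥ z) = (1 + r ^ 2) / 2 * (x ⬝ᵥ (pathD m *ᵥ x))
      + (1 - r ^ 2) / 2 * (x ⬝ᵥ (pathD m *ᵥ y)) := by
    simp only [hz, mulVec_add, mulVec_smul, dotProduct_add, add_dotProduct, dotProduct_smul,
      smul_dotProduct, smul_eq_mul, hDsymm, r5]
    ring
  have zN : z ⬝ᵥ z = (1 + r ^ 2) / 2 * (x ⬝ᵥ x) + (1 - r ^ 2) / 2 * (x ⬝ᵥ y) := by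
    simp only [hz, dotProduct_add, add_dotProduct, dotProduct_smul,
      smul_dotProduct, smul_eq_mul, hxy, r4]
    ring
  have zU : ∑ i, uVec m i * z i = (1 + r) / 2 * U + (1 - r) / 2 * W := by
    rw [← r1, hU, Finset.mul_sum, Finset.mul_sum, ← Finset.sum_add_distrib]
    refine Finset.sum_congr rfl fun i _ => ?_
    simp only [hz, hy, Pi.add_apply, Pi.smul_apply, smul_eq_mul]; ring
  have zW : ∑ i, wVec m i * z i = (1 + r) / 2 * W + (1 - r) / 2 * U := by
    rw [← r2, hW, Finset.mul_sum, Finset.mul_sum, ← Finset.sum_add_distrib]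
    refine Finset.sum_congr rfl fun i _ => ?_
    simp only [hz, hy, Pi.add_apply, Pi.smul_apply, smul_eq_mul]; ring
  have tE : t ⬝ᵥ (pathD m *ᵥ t) = ((x ⬝ᵥ (pathD m *ᵥ x)) - (x ⬝ᵥ (pathD m *ᵥ y))) / 2 := by
    simp only [ht, mulVec_sub, mulVec_smul, dotProduct_sub, sub_dotProduct, dotProduct_smul,
      smul_dotProduct, smul_eq_mul, hDsymm, r5]
    ring
  have tN : t ⬝ᵥ t = ((x ⬝ᵥ x) - (x ⬝ᵥ y)) / 2 := by
    simp only [ht, dotProduct_sub, sub_dotProduct, dotProduct_smul,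
      smul_dotProduct, smul_eq_mul, hxy, r4]
    ring
  have tS : ∑ i, t i = 0 := by
    simp only [ht, Pi.sub_apply, Pi.smul_apply, smul_eq_mul, Finset.sum_sub_distrib,
      ← Finset.mul_sum]
    have r3' : ∑ i, y i = ∑ i, x i := r3
    rw [r3']
    ring
  have tG : ∑ i, (uVec m i - wVec m i) * t i = U - W := by
    have : ∑ i, (uVec m i - wVec m i) * t i
        = 1 / 2 * U - 1 / 2 * (∑ i, uVec m i * x i.rev) - 1 / 2 * W
          + 1 / 2 * (∑ i, wVec m i * x i.rev) := by
      rw [hU, hW]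
      simp only [Finset.mul_sum, ← Finset.sum_add_distrib, ← Finset.sum_sub_distrib]
      refine Finset.sum_congr rfl fun i _ => ?_
      simp only [ht, hy, Pi.sub_apply, Pi.smul_apply, smul_eq_mul]; ring
    rw [this, r1, r2]; ring
  have hanti := aux_anti m hm t tS l (L - R) hlow hl0
  rw [tE, tN, tG] at hanti
  -- the new vector
  have hray' := hray (Sum.elim (fun _ => L' / c) (Sum.elim z (fun _ => R' / d)))
  have hray2 := ((aux_qf c m d (fun _ => L' / c) z (fun _ => R' / d)).symm.le.trans
    hray').trans_eq (congrArg (l' * ·) (aux_dot c m d (fun _ => L' / c) z (fun _ => R' / d)))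
  simp only [Finset.sum_const, Finset.card_univ, Fintype.card_fin, nsmul_eq_mul] at hray2
  have q1 : (c : ℝ) * (L' / c) = L' := by field_simp
  have q2 : (d : ℝ) * (R' / d) = R' := by field_simp
  have q3 : (c : ℝ) * (L' / c) ^ 2 = L' ^ 2 / c := by field_simp
  have q4 : (d : ℝ) * (R' / d) ^ 2 = R' ^ 2 / d := by field_simp
  rw [q1, q2, q3, q4, zU, zW, zE] at hray2
  set N' := L' ^ 2 / c + z ⬝ᵥ z + R' ^ 2 / d with hN'
  set E := x ⬝ᵥ (pathD m *ᵥ x)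
  set F := x ⬝ᵥ (pathD m *ᵥ y)
  set N := x ⬝ᵥ x
  set G := x ⬝ᵥ y
  have zz : 0 ≤ z ⬝ᵥ z := Finset.sum_nonneg fun i _ => mul_self_nonneg _
  have hmain : l * N' ≤ l' * N' := by
    refine le_trans ?_ hray2
    have g1 := mul_nonneg (sub_nonneg.2 hr1) (neg_nonneg.2 hanti)
    have g2 := mul_nonneg (by linarith : 0 ≤ l + 1) (sub_nonneg.2 hpen)
    have g3 := mul_nonneg (by linarith : 0 ≤ l + 1) (sub_nonneg.2 hCa)
    have g4 := mul_nonneg (by linarith : 0 ≤ l + 1) (sub_nonneg.2 hCb)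
    rw [hN', zN]
    generalize ∑ i, a i ^ 2 = a2 at *
    generalize ∑ i, b i ^ 2 = b2 at *
    generalize L ^ 2 / (n1 : ℝ) = X1 at *
    generalize R ^ 2 / (n2 : ℝ) = X2 at *
    generalize L' ^ 2 / (c : ℝ) = X3 at *
    generalize R' ^ 2 / (d : ℝ) = X4 at *
    rw [hL', hR']
    linarith
  have hpos : 0 < N' := by
    have hX3 : 0 ≤ L' ^ 2 / c := by positivity
    have hX4 : 0 ≤ R' ^ 2 / d := by positivity
    rcases (by positivity : 0 ≤ N').lt_or_eq with h | h
    · exact h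
    exfalso
    apply hne
    have k1 : L' ^ 2 / c = 0 := by linarith
    have k2 : R' ^ 2 / d = 0 := by linarith
    have k3 : z ⬝ᵥ z = 0 := by linarith
    have k1' : L' = 0 := by simpa [cp.ne'] using k1
    have k2' : R' = 0 := by simpa [dp.ne'] using k2
    have k3' : z = 0 := dotProduct_self_eq_zero.1 k3
    have hLR : L + R = 0 := by
      have : L' + R' = L + R := by rw [hL', hR']; ring
      linarith
    have hL0 : 0 ≤ L := Finset.sum_nonneg fun i _ => ha i
    have hR0 : 0 ≤ R := Finset.sum_nonneg fun i _ => hb i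
    have hLz : L = 0 := by linarith
    have hRz : R = 0 := by linarith
    refine ⟨fun i => ?_, fun i => ?_, fun i => ?_⟩
    · exact (Finset.sum_eq_zero_iff_of_nonneg fun i _ => ha i).1 hLz i (Finset.mem_univ _)
    · have z1 := congrFun k3' i
      have z2 := congrFun k3' i.rev
      have z1' : (1 + r) / 2 * x i + (1 - r) / 2 * x i.rev = 0 := z1
      have z2' : (1 + r) / 2 * x i.rev + (1 - r) / 2 * x i.rev.rev = 0 := z2
      rw [Fin.rev_rev] at z2'
      clear hmain hray hray' hray2 hQ hQ2 hpen
      linarith [hx i, hx i.rev]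
    · exact (Finset.sum_eq_zero_iff_of_nonneg fun i _ => hb i).1 hRz i (Finset.mem_univ _)
  exact le_of_mul_le_mul_right hmain hpos

/-- Among all clique paths `ℙ_{n1+1,2,…,2,n2+1}` with `k` cliques and `n1 + n2 = s`,
the distance spectral radius is maximized at `{n1, n2} = {⌊s/2⌋, ⌈s/2⌉}`. -/
theorem maxEig_cliquePathD_balanced_max
    (k s : ℕ) (hk : 2 ≤ k) (hs : 2 ≤ s) :
    ∀ n1 n2 : ℕ, 1 ≤ n1 → 1 ≤ n2 → n1 + n2 = s →
      maxEig (cliquePathD n1 k n2) ≤ maxEig (cliquePathD (s / 2) k ((s + 1) / 2)) := by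
  intro n1 n2 h1 h2 h
  obtain ⟨m, rfl⟩ : ∃ m, k = m + 1 := ⟨k - 1, by omega⟩
  by_cases he : n1 = n2
  · have e1 : s / 2 = n1 := by omega
    have e2 : (s + 1) / 2 = n2 := by omega
    rw [e1, e2]
  · have hne : (n1 : ℝ) - n2 ≠ 0 := by
      rw [sub_ne_zero]; exact_mod_cast he
    have hs' : s / 2 + (s + 1) / 2 = n1 + n2 := by omega
    have hsq : (((s / 2 : ℕ) : ℝ) - ((s + 1) / 2 : ℕ)) ^ 2 ≤ ((n1 : ℝ) - n2) ^ 2 := by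
      rw [sq_le_sq]
      have : |((s / 2 : ℕ) : ℤ) - ((s + 1) / 2 : ℕ)| ≤ |(n1 : ℤ) - n2| := by
        have u1 : |((s / 2 : ℕ) : ℤ) - ((s + 1) / 2 : ℕ)| = ((s + 1) / 2 : ℕ) - (s / 2 : ℕ) := by
          rw [abs_of_nonpos (by omega)]; ring
        rw [u1]
        rcases le_total (n1 : ℤ) n2 with q | q
        · rw [abs_of_nonpos (by omega)]; omega
        · rw [abs_of_nonneg (by omega)]; omega
      exact_mod_cast this
    refine aux_core m n1 n2 (s / 2) ((s + 1) / 2) (by omega) h1 h2 (by omega) (by omega)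
      ((((s / 2 : ℕ) : ℝ) - ((s + 1) / 2 : ℕ)) / ((n1 : ℝ) - n2)) ?_ ?_ ?_
    · exact_mod_cast hs'
    · field_simp
    · rw [div_pow, div_le_one (by positivity)]
      exact hsq
end
end

section
/- Let k ≥ 2 and n1, n2 ≥ 1, and let λ_1 ≥ λ_2 ≥ … ≥ λ_n (with n = n1+k−1+n2) be the eigenvalues of D(n1,k,n2), counted with multiplicity. Then the distance energy Σ_{i=1}^{n} |λ_i| equals 2·λ_1, twice the largest eigenvalue of D(n1,k,n2). -/
open Matrix

noncomputable section

/-- Doubled (shifted) position of a vertex on the line. -/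
def posN (n1 k n2 : ℕ) : Fin n1 ⊕ Fin (k - 1) ⊕ Fin n2 → ℕ
  | Sum.inl _ => 1
  | Sum.inr (Sum.inl j) => 2 * ((j : ℕ) + 1)
  | Sum.inr (Sum.inr _) => 2 * k - 1

/-- Indicator of the end vertices. -/
def sideS (n1 k n2 : ℕ) : Fin n1 ⊕ Fin (k - 1) ⊕ Fin n2 → ℝ
  | Sum.inl _ => 1
  | Sum.inr (Sum.inl _) => 0
  | Sum.inr (Sum.inr _) => 1

theorem min_eq_sum (M a b : ℕ) (ha : a ≤ M) :
    ((min a b : ℕ) : ℝ) =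
      ∑ t ∈ Finset.range M, (if t < a then (1 : ℝ) else 0) * (if t < b then (1 : ℝ) else 0) := by
  have h1 : ∀ t ∈ Finset.range M,
      (if t < a then (1 : ℝ) else 0) * (if t < b then (1 : ℝ) else 0)
        = if t < min a b then (1 : ℝ) else 0 := by
    intro t _
    by_cases h1 : t < a <;> by_cases h2 : t < b <;> simp [h1, h2]
  rw [Finset.sum_congr rfl h1, Finset.sum_boole]
  have h2 : (Finset.range M).filter (fun t => t < min a b) = Finset.range (min a b) := by
    ext t
    simp only [Finset.mem_filter, Finset.mem_range]
    omega
  rw [h2, Finset.card_range]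

theorem cliquePathD_entry (n1 k n2 : ℕ) (hk : 2 ≤ k)
    (p q : Fin n1 ⊕ Fin (k - 1) ⊕ Fin n2) :
    cliquePathD n1 k n2 p q =
      ((posN n1 k n2 p : ℝ) + sideS n1 k n2 p) / 2 + ((posN n1 k n2 q : ℝ) + sideS n1 k n2 q) / 2
      - ((min (posN n1 k n2 p) (posN n1 k n2 q) : ℕ) : ℝ)
      - (if p = q then sideS n1 k n2 p else 0) := by
  obtain ⟨m, rfl⟩ : ∃ m, k = m + 1 := ⟨k - 1, by omega⟩
  have hm : 1 ≤ m := by omega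
  have e : 2 * (m + 1) - 1 = 2 * m + 1 := by omega
  rcases p with i | i | i <;> rcases q with j | j | j
  · by_cases h : i = j <;> simp [cliquePathD, posN, sideS, h]
  · have : min 1 (2 * ((j : ℕ) + 1)) = 1 := by omega
    simp [cliquePathD, posN, sideS, uVec, this]
  · have : min 1 (2 * m + 1) = 1 := by omega
    simp [cliquePathD, posN, sideS, e]; ring
  · have : min (2 * ((i : ℕ) + 1)) 1 = 1 := by omega
    simp [cliquePathD, posN, sideS, uVec, this]
  · simp only [cliquePathD, posN, sideS, pathD]
    rcases le_total (i : ℕ) (j : ℕ) with h | h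
    · have h' : (i : ℝ) ≤ (j : ℝ) := by exact_mod_cast h
      rw [min_eq_left (by omega), abs_of_nonpos (by linarith)]
      push_cast; simp; ring
    · have h' : (j : ℝ) ≤ (i : ℝ) := by exact_mod_cast h
      rw [min_eq_right (by omega), abs_of_nonneg (by linarith)]
      push_cast; simp; ring
  · have hi := i.2
    have : min (2 * ((i : ℕ) + 1)) (2 * m + 1) = 2 * ((i : ℕ) + 1) := by omega
    simp only [cliquePathD, posN, sideS, wVec, e, this]
    push_cast; simp; ring
  · have : min (2 * m + 1) 1 = 1 := by omega
    simp [cliquePathD, posN, sideS, e]; ring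
  · have hi := j.2
    have : min (2 * m + 1) (2 * ((j : ℕ) + 1)) = 2 * ((j : ℕ) + 1) := by omega
    simp only [cliquePathD, posN, sideS, wVec, e, this]
    push_cast; simp; ring
  · by_cases h : i = j <;> simp [cliquePathD, posN, sideS, h, e] <;> ring

theorem cliquePathD_negType (n1 k n2 : ℕ) (hk : 2 ≤ k)
    (x : Fin n1 ⊕ Fin (k - 1) ⊕ Fin n2 → ℝ) (hx : ∑ p, x p = 0) :
    x ⬝ᵥ (cliquePathD n1 k n2 *ᵥ x) ≤ 0 := by
  have hpos : ∀ p, posN n1 k n2 p ≤ 2 * k := by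
    rintro (i | i | i) <;> simp only [posN] <;> omega
  set N := posN n1 k n2
  set s := sideS n1 k n2 with hs
  have hs0 : ∀ p, 0 ≤ s p := by
    rintro (i | i | i) <;> simp [hs, sideS]
  set g : Fin n1 ⊕ Fin (k - 1) ⊕ Fin n2 → ℝ := fun p => ((N p : ℝ) + s p) / 2 with hg
  have key : x ⬝ᵥ (cliquePathD n1 k n2 *ᵥ x) =
      (∑ p, x p * g p) * (∑ q, x q) + (∑ p, x p) * (∑ q, x q * g q)
      - ∑ t ∈ Finset.range (2 * k), (∑ p, x p * (if t < N p then (1 : ℝ) else 0)) ^ 2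
      - ∑ p, s p * x p ^ 2 := by
    have e1 : ∀ t, (∑ p, x p * (if t < N p then (1 : ℝ) else 0)) ^ 2 =
        ∑ p, ∑ q, (x p * (if t < N p then (1 : ℝ) else 0)) *
          (x q * (if t < N q then (1 : ℝ) else 0)) := by
      intro t; rw [sq, Finset.sum_mul_sum]
    have e2 : ∑ t ∈ Finset.range (2 * k), (∑ p, x p * (if t < N p then (1 : ℝ) else 0)) ^ 2
        = ∑ p, ∑ q, x p * x q * ((min (N p) (N q) : ℕ) : ℝ) := by
      rw [Finset.sum_congr rfl (fun t _ => e1 t), Finset.sum_comm]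
      refine Finset.sum_congr rfl fun p _ => ?_
      rw [Finset.sum_comm]
      refine Finset.sum_congr rfl fun q _ => ?_
      rw [min_eq_sum (2 * k) _ _ (hpos p), Finset.mul_sum]
      refine Finset.sum_congr rfl fun t _ => ?_
      ring
    have e3 : ∑ p, s p * x p ^ 2 = ∑ p, ∑ q, x p * x q * (if p = q then s p else 0) := by
      refine Finset.sum_congr rfl fun p _ => ?_
      simp; ring
    rw [e2, e3, Finset.sum_mul_sum, Finset.sum_mul_sum]
    simp only [dotProduct, mulVec, Finset.mul_sum, ← Finset.sum_add_distrib,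
      ← Finset.sum_sub_distrib]
    refine Finset.sum_congr rfl fun p _ => Finset.sum_congr rfl fun q _ => ?_
    rw [cliquePathD_entry n1 k n2 hk]
    simp only [hg]
    ring
  rw [key, hx]
  have h1 : 0 ≤ ∑ t ∈ Finset.range (2 * k), (∑ p, x p * (if t < N p then (1 : ℝ) else 0)) ^ 2 :=
    Finset.sum_nonneg fun t _ => sq_nonneg _
  have h2 : 0 ≤ ∑ p, s p * x p ^ 2 :=
    Finset.sum_nonneg fun p _ => mul_nonneg (hs0 p) (sq_nonneg _)
  linarith

theorem energy_of_negType {ι : Type} [Fintype ι] [DecidableEq ι] [Nonempty ι]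
    (A : Matrix ι ι ℝ) (hA : A.IsHermitian) (htr : A.trace = 0)
    (hneg : ∀ x : ι → ℝ, ∑ p, x p = 0 → x ⬝ᵥ (A *ᵥ x) ≤ 0) :
    ∑ i, |hA.eigenvalues i| = 2 * maxEig A := by
  obtain ⟨i0, hi0⟩ := Finite.exists_max hA.eigenvalues
  have hsum : ∑ i, hA.eigenvalues i = 0 := by
    have := hA.trace_eq_sum_eigenvalues
    rw [htr] at this
    simpa using this.symm
  let v : ι → ι → ℝ := fun i => ⇑(hA.eigenvectorBasis i)
  have hv : ∀ i, A *ᵥ v i = hA.eigenvalues i • v i := fun i => hA.mulVec_eigenvectorBasis i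
  have horth : ∀ i j, v i ⬝ᵥ v j = if i = j then 1 else 0 := by
    intro i j
    have := (orthonormal_iff_ite.mp hA.eigenvectorBasis.orthonormal) i j
    rw [← this]
    simp [v, PiLp.inner_apply, dotProduct, mul_comm]
  have hvne : ∀ i, v i ≠ 0 := by
    intro i h
    have := horth i i
    simp [h] at this
  have hmax : maxEig A = hA.eigenvalues i0 := by
    refine IsGreatest.csSup_eq ⟨⟨v i0, hvne i0, hv i0⟩, ?_⟩
    rintro μ ⟨x, hx, hAx⟩
    have hev : Module.End.HasEigenvalue (Matrix.toLin' A) μ :=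
      Module.End.hasEigenvalue_of_hasEigenvector
        ⟨Module.End.mem_eigenspace_iff.mpr (by simpa using hAx), hx⟩
    have hmem := hev.mem_spectrum
    rw [Matrix.spectrum_toLin', hA.spectrum_real_eq_range_eigenvalues] at hmem
    obtain ⟨i, rfl⟩ := hmem
    exact hi0 i
  have hother : ∀ i, i ≠ i0 → hA.eigenvalues i ≤ 0 := by
    intro i hi
    by_contra! hpos
    have hpos0 : 0 < hA.eigenvalues i0 := hpos.trans_le (hi0 i)
    have hq : ∀ a b : ℝ, (a • v i + b • v i0) ⬝ᵥ (A *ᵥ (a • v i + b • v i0)) =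
        a ^ 2 * hA.eigenvalues i + b ^ 2 * hA.eigenvalues i0 := by
      intro a b
      simp only [mulVec_add, mulVec_smul, hv, add_dotProduct, dotProduct_add, smul_dotProduct,
        dotProduct_smul, horth, smul_eq_mul]
      simp [hi, hi.symm]
      ring
    have hs : ∀ a b : ℝ, ∑ p, (a • v i + b • v i0) p = a * ∑ p, v i p + b * ∑ p, v i0 p := by
      intro a b
      simp [Finset.sum_add_distrib, Finset.mul_sum]
    by_cases h0 : ∑ p, v i p = 0
    · have := hneg ((1 : ℝ) • v i + (0 : ℝ) • v i0) (by rw [hs, h0]; simp)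
      rw [hq] at this
      linarith
    · have := hneg ((∑ p, v i0 p) • v i + (-∑ p, v i p) • v i0) (by rw [hs]; ring)
      rw [hq] at this
      have h1 : 0 < (-∑ p, v i p) ^ 2 := by rw [neg_sq]; positivity
      have h2 := mul_pos h1 hpos0
      have h3 := mul_nonneg (sq_nonneg (∑ p, v i0 p)) hpos.le
      linarith
  rw [hmax]
  rw [← Finset.add_sum_erase _ _ (Finset.mem_univ i0)] at hsum ⊢
  have h1 : ∑ i ∈ Finset.univ.erase i0, |hA.eigenvalues i| =
      -∑ i ∈ Finset.univ.erase i0, hA.eigenvalues i := by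
    rw [← Finset.sum_neg_distrib]
    exact Finset.sum_congr rfl fun i hi => abs_of_nonpos (hother i (Finset.ne_of_mem_erase hi))
  have h2 : ∑ i ∈ Finset.univ.erase i0, hA.eigenvalues i ≤ 0 :=
    Finset.sum_nonpos fun i hi => hother i (Finset.ne_of_mem_erase hi)
  rw [h1, abs_of_nonneg (by linarith)]
  linarith

/-- The distance energy of the clique path `ℙ_{n1+1,2,…,2,n2+1}`, i.e. the sum of the
absolute values of the eigenvalues of its distance matrix (with multiplicity),
equals twice the largest eigenvalue. -/
theorem distance_energy_cliquePathD
    (k n1 n2 : ℕ) (hk : 2 ≤ k) (hn1 : 1 ≤ n1) (hn2 : 1 ≤ n2)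
    (hA : (cliquePathD n1 k n2).IsHermitian) :
    ∑ i, |hA.eigenvalues i| = 2 * maxEig (cliquePathD n1 k n2) := by
  haveI : Nonempty (Fin n1 ⊕ Fin (k - 1) ⊕ Fin n2) := ⟨Sum.inl ⟨0, by omega⟩⟩
  refine energy_of_negType _ hA ?_ (cliquePathD_negType n1 k n2 hk)
  simp only [trace, diag]
  refine Finset.sum_eq_zero ?_
  rintro (i | i | i) _ <;> simp [cliquePathD, pathD]
end
end

section
/- Let k ≥ 2 and n1, n2 ≥ 1, and set n = n1+k−1+n2. The symmetric matrix D(n1,k,n2) has exactly one positive eigenvalue and exactly n−1 negative eigenvalues, counted with multiplicity. -/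
open Matrix

noncomputable section

lemma inertia_aux {ι : Type*} [Fintype ι] [DecidableEq ι] (A : Matrix ι ι ℝ)
    (hA : A.IsHermitian) (htr : A.trace = 0) (hcard : 2 ≤ Fintype.card ι)
    (hneg : ∀ x : ι → ℝ, ∑ p, x p = 0 → x ≠ 0 → x ⬝ᵥ (A *ᵥ x) < 0) :
    (Finset.univ.filter fun i => 0 < hA.eigenvalues i).card = 1 ∧
    (Finset.univ.filter fun i => hA.eigenvalues i < 0).card = Fintype.card ι - 1 := by
  have huniq : ∀ i j, 0 ≤ hA.eigenvalues i → 0 ≤ hA.eigenvalues j → i = j := by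
    intro i j hi hj
    by_contra hij
    set u : ι → ℝ := (hA.eigenvectorBasis i).ofLp with hu
    set v : ι → ℝ := (hA.eigenvectorBasis j).ofLp with hv
    have hAu : A *ᵥ u = hA.eigenvalues i • u := hA.mulVec_eigenvectorBasis i
    have hAv : A *ᵥ v = hA.eigenvalues j • v := hA.mulVec_eigenvectorBasis j
    have hon := hA.eigenvectorBasis.orthonormal
    have ip : ∀ a b, (hA.eigenvectorBasis a).ofLp ⬝ᵥ (hA.eigenvectorBasis b).ofLp
        = if a = b then (1 : ℝ) else 0 := by
      intro a b
      have := (orthonormal_iff_ite.mp hon) b a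
      rw [EuclideanSpace.inner_eq_star_dotProduct] at this
      simpa [eq_comm] using this
    have huu : u ⬝ᵥ u = 1 := by simpa using ip i i
    have hvv : v ⬝ᵥ v = 1 := by simpa using ip j j
    have huv : u ⬝ᵥ v = 0 := by simpa [hij] using ip i j
    have hvu : v ⬝ᵥ u = 0 := by rw [dotProduct_comm]; exact huv
    have key : ∀ c d : ℝ, c * (∑ p, u p) + d * (∑ p, v p) = 0 → c = 0 ∧ d = 0 := by
      intro c d hcd
      by_contra hne
      have hxx : (c • u + d • v) ⬝ᵥ (c • u + d • v) = c ^ 2 + d ^ 2 := by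
        simp [add_dotProduct, dotProduct_add, huu, hvv, huv, hvu]; ring
      have hq : (c • u + d • v) ⬝ᵥ (A *ᵥ (c • u + d • v))
          = c ^ 2 * hA.eigenvalues i + d ^ 2 * hA.eigenvalues j := by
        simp [mulVec_add, mulVec_smul, hAu, hAv, add_dotProduct, dotProduct_add,
          huu, hvv, huv, hvu]; ring
      have := hneg (c • u + d • v) (by
        simpa [Finset.sum_add_distrib, Finset.mul_sum] using hcd) (by
        intro h0
        rw [h0] at hxx
        simp at hxx
        apply hne
        constructor <;> nlinarith [sq_nonneg c, sq_nonneg d])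
      rw [hq] at this
      have := mul_nonneg (sq_nonneg c) hi
      have := mul_nonneg (sq_nonneg d) hj
      linarith
    have h1 := key (∑ p, v p) (-∑ p, u p) (by ring)
    have h2 := key 1 0 (by simp [neg_eq_zero.mp h1.2])
    exact one_ne_zero h2.1
  have hsum : ∑ i, hA.eigenvalues i = 0 := by
    have := hA.trace_eq_sum_eigenvalues
    rw [htr] at this
    simpa using this.symm
  obtain ⟨i₀, hi₀⟩ : ∃ i, 0 < hA.eigenvalues i := by
    by_contra! hno
    have hz : ∀ i, hA.eigenvalues i = 0 := fun i =>
      (Finset.sum_eq_zero_iff_of_nonpos (fun i _ => hno i)).mp hsum i (Finset.mem_univ i)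
    obtain ⟨a, b, hab⟩ := Fintype.one_lt_card_iff.mp hcard
    exact hab (huniq a b (hz a).ge (hz b).ge)
  have hpos : (Finset.univ.filter fun i => 0 < hA.eigenvalues i) = {i₀} := by
    ext i
    simp only [Finset.mem_filter, Finset.mem_univ, true_and, Finset.mem_singleton]
    exact ⟨fun h => huniq _ _ h.le hi₀.le, fun h => h ▸ hi₀⟩
  have hng : (Finset.univ.filter fun i => hA.eigenvalues i < 0) = Finset.univ.erase i₀ := by
    ext i
    simp only [Finset.mem_filter, Finset.mem_univ, true_and, Finset.mem_erase, and_true]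
    constructor
    · rintro h rfl
      linarith
    · intro h
      by_contra! h2
      exact h (huniq _ _ h2 hi₀.le)
  rw [hpos, hng]
  simp [Finset.card_erase_of_mem]

/-- Position of a vertex along the path. -/
def posV (n1 k n2 : ℕ) : Fin n1 ⊕ Fin (k - 1) ⊕ Fin n2 → ℕ
  | Sum.inl _ => 0
  | Sum.inr (Sum.inl i) => i + 1
  | Sum.inr (Sum.inr _) => k

/-- Indicator of position at most `t`. -/
def chi (a t : ℕ) : ℝ := if a ≤ t then 1 else 0

lemma sum_chi (k a : ℕ) (h : a ≤ k) : ∑ t ∈ Finset.range k, chi a t = (k : ℝ) - a := by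
  induction k with
  | zero => simp_all
  | succ k ih =>
    rw [Finset.sum_range_succ]
    rcases Nat.lt_or_ge k a with h1 | h1
    · have : a = k + 1 := by omega
      subst this
      rw [Finset.sum_eq_zero]
      · simp [chi]
      · intro t ht
        have := Finset.mem_range.mp ht
        simp [chi]; omega
    · rw [ih h1]; simp [chi, h1]; ring

lemma abs_eq_sum_chi (k a b : ℕ) (ha : a ≤ k) (hb : b ≤ k) :
    |(a : ℝ) - b| = ∑ t ∈ Finset.range k, (chi a t + chi b t - 2 * (chi a t * chi b t)) := by
  have hm : ∀ t, chi a t * chi b t = chi (max a b) t := by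
    intro t
    by_cases h1 : a ≤ t <;> by_cases h2 : b ≤ t <;> simp [chi, h1, h2]
  simp only [hm, Finset.sum_sub_distrib, Finset.sum_add_distrib, ← Finset.mul_sum]
  rw [sum_chi k a ha, sum_chi k b hb, sum_chi k _ (max_le ha hb)]
  rcases le_total a b with h | h
  · have : (a : ℝ) ≤ b := by exact_mod_cast h
    rw [max_eq_right h, abs_of_nonpos (by linarith)]; ring
  · have : (b : ℝ) ≤ a := by exact_mod_cast h
    rw [max_eq_left h, abs_of_nonneg (by linarith)]; ring

lemma posV_le (n1 k n2 : ℕ) (p) : posV n1 k n2 p ≤ k := by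
  rcases p with i | i | i
  · simp [posV]
  · have := i.2
    simp [posV]; omega
  · simp [posV]

lemma cliquePathD_eq (n1 k n2 : ℕ) (hk : 2 ≤ k) (p q) :
    cliquePathD n1 k n2 p q =
      |(posV n1 k n2 p : ℝ) - posV n1 k n2 q|
      + chi (posV n1 k n2 p) 0 * chi (posV n1 k n2 q) 0
      + (1 - chi (posV n1 k n2 p) (k - 1)) * (1 - chi (posV n1 k n2 q) (k - 1))
      - (if p = q then chi (posV n1 k n2 p) 0 + (1 - chi (posV n1 k n2 p) (k - 1)) else 0) := by
  have hk0 : k ≠ 0 := by omega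
  have hk1 : ¬ k ≤ k - 1 := by omega
  have hc : ((k - 1 : ℕ) : ℝ) = (k : ℝ) - 1 := by
    rw [Nat.cast_sub (by omega)]; simp
  have hi : ∀ i : Fin (k - 1), (i : ℕ) + 1 ≤ k - 1 := fun i => i.2
  have hi' : ∀ i : Fin (k - 1), ((i : ℕ) : ℝ) + 1 ≤ k - 1 := fun i => by
    rw [← hc]; exact_mod_cast hi i
  rcases p with i | i | i <;> rcases q with j | j | j
  · by_cases h : i = j <;> simp [cliquePathD, posV, chi, h]
  · simp [cliquePathD, posV, chi, uVec, hi]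
    rw [abs_of_nonpos (by have : (0:ℝ) ≤ (j : ℕ) := Nat.cast_nonneg _
                          linarith)]; ring
  · simp [cliquePathD, posV, chi, hk0]
  · simp [cliquePathD, posV, chi, uVec, hi]
    rw [abs_of_nonneg (by positivity)]
  · simp [cliquePathD, posV, chi, pathD, hi]
  · simp [cliquePathD, posV, chi, wVec, hi, hc, hk0]
    rw [abs_of_nonpos (by linarith [hi' i])]; ring
  · simp [cliquePathD, posV, chi, hk0]
  · simp [cliquePathD, posV, chi, wVec, hi, hc, hk0]
    rw [abs_of_nonneg (by linarith [hi' j])]; ring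
  · by_cases h : i = j <;> simp [cliquePathD, posV, chi, h, hk0, hk1]

lemma quad_eq (n1 k n2 : ℕ) (hk : 2 ≤ k) (x : Fin n1 ⊕ Fin (k - 1) ⊕ Fin n2 → ℝ)
    (hx : ∑ p, x p = 0) :
    x ⬝ᵥ (cliquePathD n1 k n2 *ᵥ x) =
      - 2 * ∑ t ∈ Finset.range k, (∑ p, chi (posV n1 k n2 p) t * x p) ^ 2
      + (∑ p, chi (posV n1 k n2 p) 0 * x p) ^ 2
      + (∑ p, chi (posV n1 k n2 p) (k - 1) * x p) ^ 2
      - ∑ p, (chi (posV n1 k n2 p) 0 + (1 - chi (posV n1 k n2 p) (k - 1))) * x p ^ 2 := by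
  set c : (Fin n1 ⊕ Fin (k - 1) ⊕ Fin n2) → ℕ → ℝ := fun p t => chi (posV n1 k n2 p) t with hc
  have prod : ∀ f g : (Fin n1 ⊕ Fin (k - 1) ⊕ Fin n2) → ℝ,
      ∑ p, ∑ q, (f p * x p) * (g q * x q) = (∑ p, f p * x p) * ∑ q, g q * x q := by
    intro f g
    rw [Finset.sum_mul_sum]
  have hD : x ⬝ᵥ (cliquePathD n1 k n2 *ᵥ x) = ∑ p, ∑ q, cliquePathD n1 k n2 p q * (x p * x q) := by
    simp only [dotProduct, mulVec, Finset.mul_sum]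
    refine Finset.sum_congr rfl fun p _ => Finset.sum_congr rfl fun q _ => by ring
  have hR : ∑ p, (1 - c p (k - 1)) * x p = - ∑ p, c p (k - 1) * x p := by
    simp [sub_mul, Finset.sum_sub_distrib, hx]
  have h1 : ∑ p, ∑ q, |(posV n1 k n2 p : ℝ) - posV n1 k n2 q| * (x p * x q)
      = - 2 * ∑ t ∈ Finset.range k, (∑ p, c p t * x p) ^ 2 := by
    have : ∀ p q, |(posV n1 k n2 p : ℝ) - posV n1 k n2 q| * (x p * x q)
        = ∑ t ∈ Finset.range k, ((c p t * x p) * (1 * x q) + (1 * x p) * (c q t * x q)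
          - 2 * ((c p t * x p) * (c q t * x q))) := by
      intro p q
      rw [abs_eq_sum_chi k _ _ (posV_le n1 k n2 p) (posV_le n1 k n2 q), Finset.sum_mul]
      refine Finset.sum_congr rfl fun t _ => by simp only [hc]; ring
    simp only [this]
    simp_rw [Finset.sum_comm (s := Finset.univ) (t := Finset.range k)]
    rw [Finset.mul_sum]
    refine Finset.sum_congr rfl fun t _ => ?_
    simp only [Finset.sum_sub_distrib, Finset.sum_add_distrib, ← Finset.mul_sum]
    simp only [one_mul, hx, ← Finset.sum_mul]
    ring
  have h2 := prod (fun p => c p 0) (fun p => c p 0)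
  have h3 := prod (fun p => 1 - c p (k - 1)) (fun p => 1 - c p (k - 1))
  have h4 : ∑ p, ∑ q, (if p = q then c p 0 + (1 - c p (k - 1)) else 0) * (x p * x q)
      = ∑ p, (c p 0 + (1 - c p (k - 1))) * x p ^ 2 := by
    refine Finset.sum_congr rfl fun p _ => ?_
    simp [ite_mul, sq]
  rw [hR] at h3
  rw [hD, ← h1, ← h4]
  have e2 : (∑ p, c p 0 * x p) ^ 2 = ∑ p, ∑ q, (c p 0 * x p) * (c q 0 * x q) := by
    rw [h2]; ring
  have e3 : (∑ p, c p (k - 1) * x p) ^ 2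
      = ∑ p, ∑ q, ((1 - c p (k - 1)) * x p) * ((1 - c q (k - 1)) * x q) := by
    rw [h3]; ring
  rw [e2, e3]
  simp only [← Finset.sum_add_distrib, ← Finset.sum_sub_distrib]
  refine Finset.sum_congr rfl fun p _ => Finset.sum_congr rfl fun q _ => ?_
  rw [cliquePathD_eq n1 k n2 hk]
  simp only [hc]
  ring

lemma quad_neg (n1 k n2 : ℕ) (hk : 2 ≤ k) (x : Fin n1 ⊕ Fin (k - 1) ⊕ Fin n2 → ℝ)
    (hx : ∑ p, x p = 0) (hx0 : x ≠ 0) :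
    x ⬝ᵥ (cliquePathD n1 k n2 *ᵥ x) < 0 := by
  by_contra! hQ
  rw [quad_eq n1 k n2 hk x hx] at hQ
  set S : ℕ → ℝ := fun t => ∑ p, chi (posV n1 k n2 p) t * x p with hS
  have hkk : ¬ k ≤ k - 1 := by omega
  have hi : ∀ i : Fin (k - 1), (i : ℕ) + 1 ≤ k - 1 := fun i => i.2
  have hends : S 0 ^ 2 + S (k - 1) ^ 2 ≤ ∑ t ∈ Finset.range k, S t ^ 2 := by
    have : ∑ t ∈ ({0, k - 1} : Finset ℕ), S t ^ 2 ≤ ∑ t ∈ Finset.range k, S t ^ 2 := by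
      apply Finset.sum_le_sum_of_subset_of_nonneg
      · intro t ht
        simp at ht
        simp; omega
      · intros; positivity
    rwa [Finset.sum_pair (by omega)] at this
  have hw : ∀ p, 0 ≤ (chi (posV n1 k n2 p) 0 + (1 - chi (posV n1 k n2 p) (k - 1))) := by
    intro p
    unfold chi
    split_ifs <;> norm_num
  have hSn : 0 ≤ ∑ t ∈ Finset.range k, S t ^ 2 := Finset.sum_nonneg fun _ _ => sq_nonneg _
  have hTn : 0 ≤ ∑ p, (chi (posV n1 k n2 p) 0 + (1 - chi (posV n1 k n2 p) (k - 1))) * x p ^ 2 :=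
    Finset.sum_nonneg fun p _ => mul_nonneg (hw p) (sq_nonneg _)
  have hS0 : ∑ t ∈ Finset.range k, S t ^ 2 = 0 := by linarith
  have hT0 : ∑ p, (chi (posV n1 k n2 p) 0 + (1 - chi (posV n1 k n2 p) (k - 1))) * x p ^ 2 = 0 := by
    linarith
  rw [Finset.sum_eq_zero_iff_of_nonneg (fun _ _ => sq_nonneg _)] at hS0
  rw [Finset.sum_eq_zero_iff_of_nonneg
    (fun p _ => mul_nonneg (hw p) (sq_nonneg _))] at hT0
  apply hx0
  funext p
  rcases p with i | i | i
  · simpa [posV, chi] using hT0 (Sum.inl i) (Finset.mem_univ _)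
  · have ha := hS0 i (Finset.mem_range.mpr (by have := hi i; omega))
    have hb := hS0 (i + 1) (Finset.mem_range.mpr (by have := hi i; omega))
    have ha' : S i = 0 := by simpa using ha
    have hb' : S (i + 1) = 0 := by simpa using hb
    have hd : S (i + 1) - S i = x (Sum.inr (Sum.inl i)) := by
      simp only [hS]
      rw [← Finset.sum_sub_distrib, Finset.sum_eq_single (Sum.inr (Sum.inl i))]
      · simp [posV, chi]
      · intro q _ hq
        have hne : posV n1 k n2 q ≠ i + 1 := by
          have := hi i
          rcases q with j | j | j
          · simp [posV]
          · intro h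
            simp [posV] at h
            exact hq (by rw [Fin.ext h])
          · simp [posV]; omega
        have : chi (posV n1 k n2 q) (i + 1) = chi (posV n1 k n2 q) i := by
          unfold chi
          by_cases h : posV n1 k n2 q ≤ i
          · rw [if_pos h, if_pos (by omega)]
          · rw [if_neg h, if_neg (by omega)]
        rw [this, sub_self]
      · simp
    rw [← hd, ha', hb']; simp
  · have hk0 : k ≠ 0 := by omega
    simpa [posV, chi, hkk, hk0] using hT0 (Sum.inr (Sum.inr i)) (Finset.mem_univ _)

/-- The distance matrix of the clique path `ℙ_{n1+1,2,…,2,n2+1}` on `n = n1 + (k-1) + n2`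
vertices has exactly one positive eigenvalue and exactly `n - 1` negative eigenvalues,
counted with multiplicity. -/
theorem inertia_cliquePathD
    (k n1 n2 : ℕ) (hk : 2 ≤ k) (hn1 : 1 ≤ n1) (hn2 : 1 ≤ n2)
    (hA : (cliquePathD n1 k n2).IsHermitian) :
    (Finset.univ.filter fun i => 0 < hA.eigenvalues i).card = 1 ∧
    (Finset.univ.filter fun i => hA.eigenvalues i < 0).card = (n1 + (k - 1) + n2) - 1 := by
  have h := inertia_aux (cliquePathD n1 k n2) hA (by
      simp [Matrix.trace, cliquePathD, pathD]) (by simp; omega) (quad_neg n1 k n2 hk)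
  have hc : Fintype.card (Fin n1 ⊕ Fin (k - 1) ⊕ Fin n2) = n1 + (k - 1) + n2 := by
    simp; omega
  rw [hc] at h
  exact h
end
end

section
/- Let k ≥ 2 and n1, n2 ≥ 1. Partition the index set of D(n1,k,n2) into X_1 (the first n1 indices), the k−1 singletons corresponding to the middle block, and X_{k+1} (the last n2 indices), and let S be the (n1+k−1+n2)×(k+1) characteristic matrix of this partition (S_{ij} = 1 if index i lies in the j-th part, and 0 otherwise). Then this partition is equitable with quotient matrix B(n1,k,n2); that is, D(n1,k,n2)·S = S·B(n1,k,n2). -/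
open Matrix

noncomputable section

/-- The quotient matrix `B(n1,k,n2)` of the clique path distance matrix. -/
def quotB (n1 k n2 : ℕ) :
    Matrix (Unit ⊕ Fin (k - 1) ⊕ Unit) (Unit ⊕ Fin (k - 1) ⊕ Unit) ℝ :=
  fun p q =>
    match p, q with
    | Sum.inl _, Sum.inl _ => (n1 : ℝ) - 1
    | Sum.inl _, Sum.inr (Sum.inl j) => uVec (k - 1) j
    | Sum.inl _, Sum.inr (Sum.inr _) => (k : ℝ) * n2
    | Sum.inr (Sum.inl i), Sum.inl _ => (n1 : ℝ) * uVec (k - 1) i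
    | Sum.inr (Sum.inl i), Sum.inr (Sum.inl j) => pathD (k - 1) i j
    | Sum.inr (Sum.inl i), Sum.inr (Sum.inr _) => (n2 : ℝ) * wVec (k - 1) i
    | Sum.inr (Sum.inr _), Sum.inl _ => (k : ℝ) * n1
    | Sum.inr (Sum.inr _), Sum.inr (Sum.inl j) => wVec (k - 1) j
    | Sum.inr (Sum.inr _), Sum.inr (Sum.inr _) => (n2 : ℝ) - 1

/-- Characteristic matrix of the partition of the vertices of the clique path into the first
clique minus the cut vertex, the `k-1` cut/path vertices (as singletons), and the last clique
minus the cut vertex. -/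
def charS (n1 k n2 : ℕ) :
    Matrix (Fin n1 ⊕ Fin (k - 1) ⊕ Fin n2) (Unit ⊕ Fin (k - 1) ⊕ Unit) ℝ :=
  fun p q =>
    match p, q with
    | Sum.inl _, Sum.inl _ => 1
    | Sum.inr (Sum.inl i), Sum.inr (Sum.inl j) => if i = j then 1 else 0
    | Sum.inr (Sum.inr _), Sum.inr (Sum.inr _) => 1
    | _, _ => 0

/-- The natural partition of the clique path is equitable with quotient matrix `B(n1,k,n2)`:
`D(n1,k,n2) · S = S · B(n1,k,n2)`. -/
theorem cliquePathD_mul_charS_eq_charS_mul_quotB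
    (k n1 n2 : ℕ) (hk : 2 ≤ k) (hn1 : 1 ≤ n1) (hn2 : 1 ≤ n2) :
    cliquePathD n1 k n2 * charS n1 k n2 = charS n1 k n2 * quotB n1 k n2 := by
  have key : ∀ (n : ℕ) (i : Fin n), (∑ j : Fin n, if i = j then (0 : ℝ) else 1) = (n : ℝ) - 1 := by
    intro n i
    have h : ∀ j : Fin n, (if i = j then (0 : ℝ) else 1) = 1 - (if i = j then (1 : ℝ) else 0) := by
      intro j
      split_ifs <;> norm_num
    simp only [h, Finset.sum_sub_distrib]
    simp
  ext p q
  rcases p with i | i | i <;> rcases q with j | j | j <;>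
    simp [Matrix.mul_apply, cliquePathD, charS, quotB, key, mul_comm]
end
end

section
/- Let m ≥ 2 and let X ∈ ℝ^m be any eigenvector of D_m corresponding to the largest eigenvalue λ(D_m). Then X is symmetric under reversal, i.e. X_i = X_{m+1−i} for all 1 ≤ i ≤ m; consequently X^T (u_m − w_m) = 0. -/
open Matrix

noncomputable section

lemma pathD_isHermitian (m : ℕ) : (pathD m).IsHermitian := by
  ext i j
  simp [pathD, Matrix.conjTranspose_apply, abs_sub_comm]

lemma sum_ind (m a : ℕ) (h : a ≤ m) :
    ∑ k ∈ Finset.range m, (if k < a then (1 : ℝ) else 0) = a := by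
  rw [Finset.sum_ite, Finset.sum_const_zero, add_zero, Finset.sum_const, nsmul_eq_mul, mul_one]
  congr 1
  have : (Finset.range m).filter (fun k => k < a) = Finset.range a := by
    ext k; simp; omega
  rw [this, Finset.card_range]

lemma pathD_eq (m : ℕ) (i j : Fin m) :
    pathD m i j = (i : ℝ) + j - 2 * ∑ k ∈ Finset.range m,
      (if k < (i : ℕ) then (1 : ℝ) else 0) * (if k < (j : ℕ) then (1 : ℝ) else 0) := by
  have h : ∀ k ∈ Finset.range m, (if k < (i : ℕ) then (1 : ℝ) else 0) *
      (if k < (j : ℕ) then (1 : ℝ) else 0) = if k < min (i : ℕ) (j : ℕ) then (1 : ℝ) else 0 := by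
    intro k _
    by_cases h1 : k < (i : ℕ) <;> by_cases h2 : k < (j : ℕ) <;> simp [h1, h2]
  rw [Finset.sum_congr rfl h, sum_ind m _ (by omega)]
  unfold pathD
  rcases le_total (i : ℕ) (j : ℕ) with h | h
  · have h' : (i : ℝ) ≤ j := by exact_mod_cast h
    rw [min_eq_left h, abs_of_nonpos (by linarith)]; ring
  · have h' : (j : ℝ) ≤ i := by exact_mod_cast h
    rw [min_eq_right h, abs_of_nonneg (by linarith)]; ring

lemma pathD_quad (m : ℕ) (Y : Fin m → ℝ) (h : ∑ i, Y i = 0) :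
    Y ⬝ᵥ (pathD m).mulVec Y ≤ 0 := by
  have key : Y ⬝ᵥ (pathD m).mulVec Y = - 2 * ∑ k ∈ Finset.range m,
      (∑ i : Fin m, (if k < (i : ℕ) then (1 : ℝ) else 0) * Y i) ^ 2 := by
    have h1 : ∀ i, (pathD m).mulVec Y i = (∑ j : Fin m, (j : ℝ) * Y j) -
        2 * ∑ k ∈ Finset.range m, (if k < (i : ℕ) then (1 : ℝ) else 0) *
          ∑ j : Fin m, (if k < (j : ℕ) then (1 : ℝ) else 0) * Y j := by
      intro i
      simp only [Matrix.mulVec, dotProduct, pathD_eq, sub_mul, add_mul, Finset.sum_sub_distrib,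
        Finset.sum_add_distrib, ← Finset.mul_sum, h, mul_zero, zero_add, mul_assoc]
      congr 2
      simp only [Finset.mul_sum, Finset.sum_mul]
      rw [Finset.sum_comm]
      simp only [mul_assoc]
    simp only [dotProduct, h1, mul_sub, Finset.sum_sub_distrib, ← Finset.sum_mul, h, zero_mul,
      zero_sub, neg_mul, pow_two]
    congr 1
    simp only [mul_left_comm _ (2 : ℝ), ← Finset.mul_sum]
    congr 1
    simp only [Finset.mul_sum (Finset.range m)]
    rw [Finset.sum_comm]
    refine Finset.sum_congr rfl fun k _ => ?_
    rw [Finset.sum_mul]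
    refine Finset.sum_congr rfl fun i _ => ?_
    ring
  rw [key]
  have : 0 ≤ ∑ k ∈ Finset.range m,
      (∑ i : Fin m, (if k < (i : ℕ) then (1 : ℝ) else 0) * Y i) ^ 2 :=
    Finset.sum_nonneg fun _ _ => sq_nonneg _
  linarith

lemma maxEig_pos (m : ℕ) (hm : 2 ≤ m) : 0 < maxEig (pathD m) := by
  have hH := pathD_isHermitian m
  have hb : BddAbove {μ : ℝ | ∃ v : Fin m → ℝ, v ≠ 0 ∧ (pathD m).mulVec v = μ • v} := by
    apply Set.Finite.bddAbove
    refine (Module.End.finite_hasEigenvalue (Matrix.toLin' (pathD m))).subset ?_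
    rintro μ ⟨v, hv, h⟩
    exact Module.End.hasEigenvalue_of_hasEigenvector (x := v)
      ⟨Module.End.mem_eigenspace_iff.2 (by simpa using h), hv⟩
  have hex : ∃ i, 0 < hH.eigenvalues i := by
    by_contra! hc
    have ht := hH.trace_eq_sum_eigenvalues
    have h0 : (pathD m).trace = 0 := by simp [Matrix.trace, pathD]
    rw [h0] at ht
    have ht' : ∑ i, hH.eigenvalues i = 0 := by simpa using ht.symm
    have hz := (Finset.sum_eq_zero_iff_of_nonpos (fun i _ => hc i)).1 ht'
    have : pathD m = 0 := hH.eigenvalues_eq_zero_iff.1 (funext fun i => hz i (Finset.mem_univ i))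
    have h2 := congrFun (congrFun this ⟨0, by omega⟩) ⟨1, by omega⟩
    simp [pathD] at h2
  obtain ⟨i, hi⟩ := hex
  refine hi.trans_le (le_csSup hb ⟨_, ?_, hH.mulVec_eigenvectorBasis i⟩)
  intro h
  apply hH.eigenvectorBasis.orthonormal.ne_zero i
  ext j
  exact congrFun h j

/-- Any eigenvector of `D_m` for the largest eigenvalue is symmetric under reversal of the
indices; consequently it is orthogonal to `u_m − w_m`. -/
theorem perron_eigenvector_pathD_symmetric
    (m : ℕ) (hm : 2 ≤ m) (X : Fin m → ℝ) (hX : X ≠ 0)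
    (hEig : (pathD m).mulVec X = maxEig (pathD m) • X) :
    (∀ i : Fin m, X i = X i.rev) ∧ X ⬝ᵥ (uVec m - wVec m) = 0 := by
  have hsym : ∀ i : Fin m, X i = X i.rev := by
    set Y : Fin m → ℝ := fun i => X i - X i.rev with hY
    have hs : ∀ f : Fin m → ℝ, ∑ i, f (Fin.rev i) = ∑ i, f i := fun f =>
      Equiv.sum_comp Fin.revPerm f
    have hsum : ∑ i, Y i = 0 := by
      simp only [hY, Finset.sum_sub_distrib, hs X, sub_self]
    have hYe : (pathD m).mulVec Y = maxEig (pathD m) • Y := by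
      ext i
      have h1 := congrFun hEig i
      have h2 := congrFun hEig i.rev
      simp only [Matrix.mulVec, dotProduct, Pi.smul_apply, smul_eq_mul] at h1 h2 ⊢
      rw [← hs] at h2
      have hr : ∀ j : Fin m, pathD m i.rev j.rev = pathD m i j := by
        intro j
        have a := i.2
        have b := j.2
        simp only [pathD, Fin.val_rev]
        rw [Nat.cast_sub (by omega), Nat.cast_sub (by omega), abs_sub_comm]
        congr 1
        push_cast
        ring
      simp only [hr] at h2
      simp only [hY, mul_sub, Finset.sum_sub_distrib, h1, h2]
    have hq := pathD_quad m Y hsum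
    rw [hYe, dotProduct_smul, smul_eq_mul] at hq
    have hp := maxEig_pos m hm
    have hn : 0 ≤ Y ⬝ᵥ Y := Finset.sum_nonneg fun i _ => mul_self_nonneg _
    have h0 : Y ⬝ᵥ Y = 0 := by nlinarith
    have hY0 := dotProduct_self_eq_zero.1 h0
    intro i
    have := congrFun hY0 i
    simp only [hY, Pi.zero_apply] at this
    linarith
  refine ⟨hsym, ?_⟩
  have h1 : X ⬝ᵥ (uVec m - wVec m) = ∑ i, X (Fin.rev i) * (uVec m - wVec m) (Fin.rev i) :=
    (Equiv.sum_comp Fin.revPerm (fun i => X i * (uVec m - wVec m) i)).symm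
  have h2 : ∑ i, X (Fin.rev i) * (uVec m - wVec m) (Fin.rev i) = - (X ⬝ᵥ (uVec m - wVec m)) := by
    rw [dotProduct, ← Finset.sum_neg_distrib]
    refine Finset.sum_congr rfl fun i _ => ?_
    have a := i.2
    rw [← hsym i]
    simp only [uVec, wVec, Pi.sub_apply, Fin.val_rev]
    rw [Nat.cast_sub (by omega)]
    push_cast
    ring
  linarith
end
end

section
/- Let k ≥ 3 and let x be a real number with x ≥ λ(D_k). Then (1/2)·(u_{k−1} − w_{k−1})^T (xI − D_{k−1})^{−1} (u_{k−1} − w_{k−1}) < k − 1. -/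
open Matrix

noncomputable section

theorem bdd_eig {m : ℕ} (A : Matrix (Fin m) (Fin m) ℝ) :
    BddAbove {μ : ℝ | ∃ v : Fin m → ℝ, v ≠ 0 ∧ A.mulVec v = μ • v} := by
  have h := Module.End.finite_hasEigenvalue (Matrix.toLin' A)
  refine (Set.Finite.subset h ?_).bddAbove
  rintro μ ⟨v, hv, h⟩
  exact Module.End.hasEigenvalue_of_hasEigenvector (x := v)
    ⟨Module.End.mem_eigenspace_iff.2 (by simpa using h), hv⟩

theorem psd_of_le {m : ℕ} (A : Matrix (Fin m) (Fin m) ℝ) (hA : A.IsHermitian) (x : ℝ)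
    (hx : maxEig A ≤ x) : (x • (1 : Matrix (Fin m) (Fin m) ℝ) - A).PosSemidef := by
  have hM : (x • (1 : Matrix (Fin m) (Fin m) ℝ) - A).IsHermitian := by
    refine Matrix.IsHermitian.sub ?_ hA
    ext i j
    simp [Matrix.one_apply, eq_comm]
  rw [hM.posSemidef_iff_eigenvalues_nonneg]
  intro i
  have h1 := hM.mulVec_eigenvectorBasis i
  set v := hM.eigenvectorBasis i with hv
  have hne : v ≠ 0 := hM.eigenvectorBasis.orthonormal.ne_zero i
  have h2 : x - hM.eigenvalues i ≤ maxEig A := by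
    apply le_csSup (bdd_eig A)
    refine ⟨v.ofLp, ?_, ?_⟩
    · intro h
      exact hne (by ext j; simpa using congrFun h j)
    · rw [Matrix.sub_mulVec, Matrix.smul_mulVec, Matrix.one_mulVec] at h1
      rw [sub_smul, ← h1]
      simp
  simp only [Pi.zero_apply]
  linarith

theorem sum_dist (k : ℕ) : ∑ i ∈ Finset.range k, ∑ j ∈ Finset.range k, |(i : ℝ) - j|
    = k * (k ^ 2 - 1) / 3 := by
  have row : ∀ k : ℕ, ∑ i ∈ Finset.range k, ((k : ℝ) - i) = k * (k + 1) / 2 := by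
    intro k
    have : ∑ i ∈ Finset.range k, (i : ℝ) = k * (k - 1) / 2 := by
      induction k with
      | zero => simp
      | succ n ih => rw [Finset.sum_range_succ, ih]; push_cast; ring
    rw [Finset.sum_sub_distrib, this]
    simp
    ring
  induction k with
  | zero => simp
  | succ n ih =>
    simp only [Finset.sum_range_succ, Finset.sum_add_distrib]
    rw [ih]
    have h1 : ∑ i ∈ Finset.range n, |(i : ℝ) - n| = n * (n + 1) / 2 := by
      rw [← row n]
      refine Finset.sum_congr rfl fun i hi => ?_
      have : (i : ℝ) ≤ n := by exact_mod_cast (Finset.mem_range.1 hi).le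
      rw [abs_of_nonpos (by linarith)]; ring
    have h2 : ∑ i ∈ Finset.range n, |(n : ℝ) - i| = n * (n + 1) / 2 := by
      rw [← h1]
      exact Finset.sum_congr rfl fun i hi => abs_sub_comm _ _
    rw [h1, h2]
    push_cast
    simp
    ring

theorem sum_z (n : ℕ) (c : ℝ) : ∑ i ∈ Finset.range n, (2 * (i : ℝ) + 1 - c) ^ 2
    = n * (4 * n ^ 2 - 1) / 3 - 2 * c * n ^ 2 + n * c ^ 2 := by
  induction n with
  | zero => simp
  | succ n ih => rw [Finset.sum_range_succ, ih]; push_cast; ring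

theorem neg_on_zero {n : ℕ} (v : Fin n → ℝ) (hv : ∑ i, v i = 0) :
    v ⬝ᵥ (pathD n).mulVec v ≤ 0 := by
  have key : ∀ i j : Fin n, |(i : ℝ) - j| = i + j -
      2 * ∑ t : Fin n, (if t < i then (1 : ℝ) else 0) * (if t < j then 1 else 0) := by
    intro i j
    have h : ∑ t : Fin n, (if t < i then (1 : ℝ) else 0) * (if t < j then 1 else 0)
        = min (i : ℝ) j := by
      have h1 : ∀ t : Fin n, (if t < i then (1 : ℝ) else 0) * (if t < j then 1 else 0)
          = if t < min i j then 1 else 0 := by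
        intro t
        by_cases a : t < i <;> by_cases b : t < j <;> simp [a, b]
      simp only [h1, Finset.sum_boole]
      have h2 : (Finset.univ.filter fun t : Fin n => t < min i j) = Finset.Iio (min i j) := by
        ext t; simp
      rw [h2, Fin.card_Iio]
      rcases le_total i j with hij | hij
      · have : (i : ℝ) ≤ j := by exact_mod_cast hij
        rw [min_eq_left hij, min_eq_left this]
      · have : (j : ℝ) ≤ i := by exact_mod_cast hij
        rw [min_eq_right hij, min_eq_right this]
    rw [h]
    rcases le_total (i : ℝ) j with hij | hij
    · rw [min_eq_left hij, abs_of_nonpos (by linarith)]; ring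
    · rw [min_eq_right hij, abs_of_nonneg (by linarith)]; ring
  have e : v ⬝ᵥ (pathD n).mulVec v =
      - 2 * ∑ t : Fin n, (∑ i, (if t < i then (1 : ℝ) else 0) * v i) ^ 2 := by
    have e1 : v ⬝ᵥ (pathD n).mulVec v = ∑ i, ∑ j, ((i * v i) * v j + v i * (j * v j)
        - 2 * ∑ t : Fin n, ((if t < i then (1 : ℝ) else 0) * v i) *
          ((if t < j then 1 else 0) * v j)) := by
      simp only [dotProduct, Matrix.mulVec, pathD, Finset.mul_sum]
      refine Finset.sum_congr rfl fun i _ => Finset.sum_congr rfl fun j _ => ?_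
      rw [key i j, ← Finset.mul_sum]
      have : ∑ t : Fin n, ((if t < i then (1 : ℝ) else 0) * v i) *
          ((if t < j then 1 else 0) * v j) = (∑ t : Fin n, (if t < i then (1 : ℝ) else 0) *
          (if t < j then 1 else 0)) * (v i * v j) := by
        rw [Finset.sum_mul]
        exact Finset.sum_congr rfl fun t _ => by ring
      rw [this]; ring
    rw [e1]
    simp only [Finset.sum_sub_distrib, Finset.sum_add_distrib, ← Finset.mul_sum, hv, mul_zero,
      ← Finset.sum_mul, Finset.sum_const_zero, zero_mul, zero_add, zero_sub]
    rw [neg_mul]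
    congr 2
    simp only [sq, Finset.sum_mul_sum]
    rw [Finset.sum_comm]
    rw [Finset.sum_comm' (t' := Finset.univ) (s' := fun _ => Finset.univ) (by simp)]
    rw [Finset.sum_comm]
    symm
    rw [Finset.sum_comm]
    refine Finset.sum_congr rfl fun i _ => ?_
    rw [Finset.sum_comm]
    refine Finset.sum_congr rfl fun j _ => Finset.sum_congr rfl fun t _ => ?_
    ring
  rw [e]
  have : 0 ≤ ∑ t : Fin n, (∑ i, (if t < i then (1 : ℝ) else 0) * v i) ^ 2 :=
    Finset.sum_nonneg fun _ _ => sq_nonneg _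
  linarith

theorem x_lower (k : ℕ) (hk : 0 < k) (x : ℝ) (hx : maxEig (pathD k) ≤ x) :
    ((k : ℝ) ^ 2 - 1) / 3 ≤ x := by
  have hH : (pathD k).IsHermitian := by
    ext i j
    simp [pathD, abs_sub_comm]
  have h := (psd_of_le _ hH x hx).dotProduct_mulVec_nonneg (fun _ => (1 : ℝ))
  have e : (∑ i : Fin k, ∑ j : Fin k, |(i : ℝ) - j|) = k * (k ^ 2 - 1) / 3 := by
    rw [← sum_dist k, Finset.sum_range]
    exact Finset.sum_congr rfl fun i _ => by rw [Finset.sum_range]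
  rw [Matrix.sub_mulVec, Matrix.smul_mulVec, Matrix.one_mulVec, dotProduct_sub] at h
  simp [dotProduct, Matrix.mulVec, pathD] at h
  rw [e] at h
  have hk' : (0 : ℝ) < k := by exact_mod_cast hk
  by_contra hc
  push Not at hc
  nlinarith

theorem core (n : ℕ) (hn : 2 ≤ n) (x : ℝ) (hx : (((n : ℝ) + 1) ^ 2 - 1) / 3 ≤ x) :
    (1 / 2) * ((uVec n - wVec n) ⬝ᵥ
      ((x • (1 : Matrix (Fin n) (Fin n) ℝ) - pathD n)⁻¹).mulVec (uVec n - wVec n)) < n := by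
  have hn' : (2 : ℝ) ≤ n := by exact_mod_cast hn
  set A := x • (1 : Matrix (Fin n) (Fin n) ℝ) - pathD n with hA
  set z := uVec n - wVec n with hz
  by_cases hdet : IsUnit A.det
  swap
  · rw [Matrix.nonsing_inv_apply_not_isUnit _ hdet]
    simp
    omega
  set y := A⁻¹.mulVec z with hy
  have hAy : A.mulVec y = z := by
    rw [hy, Matrix.mulVec_mulVec, Matrix.mul_nonsing_inv _ hdet, Matrix.one_mulVec]
  have hrev : ∀ i : Fin n, ((Fin.rev i : Fin n) : ℝ) = n - 1 - i := by
    intro i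
    rw [Fin.val_rev, Nat.cast_sub (by omega)]; push_cast; ring
  have hzr : ∀ i, z (Fin.rev i) = - z i := by
    intro i
    simp only [hz, uVec, wVec, Pi.sub_apply, hrev]; ring
  have hD : ∀ i j, pathD n (Fin.rev i) (Fin.rev j) = pathD n i j := by
    intro i j
    simp only [pathD, hrev]
    rw [abs_sub_comm]; congr 1; ring
  have hDy : ∀ (v : Fin n → ℝ) i, (A.mulVec v) i = x * v i - ∑ j, pathD n i j * v j := by
    intro v i
    rw [hA, Matrix.sub_mulVec, Matrix.smul_mulVec, Matrix.one_mulVec]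
    simp [Matrix.mulVec, dotProduct]
  have hyr : A.mulVec (fun i => - y (Fin.rev i)) = z := by
    ext i
    have h1 : z (Fin.rev i) = _ := (congrFun hAy (Fin.rev i)).symm.trans (hDy y _)
    have h2 : ∑ j, pathD n (Fin.rev i) j * y j = ∑ j, pathD n i j * y (Fin.rev j) := by
      rw [← Equiv.sum_comp Fin.revPerm]
      simp [hD]
    rw [hzr, h2] at h1
    rw [hDy]
    simp only [mul_neg, Finset.sum_neg_distrib]
    linarith
  have hanti : (fun i => - y (Fin.rev i)) = y := by
    have := congrArg (A⁻¹.mulVec) hyr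
    rwa [Matrix.mulVec_mulVec, Matrix.nonsing_inv_mul _ hdet, Matrix.one_mulVec] at this
  have hsum : ∑ i, y i = 0 := by
    have h1 : ∑ i, y i = ∑ i, y (Fin.rev i) := (Equiv.sum_comp Fin.revPerm y).symm
    have h2 : ∑ i, y i = - ∑ i, y (Fin.rev i) := by
      rw [← Finset.sum_neg_distrib]
      exact Finset.sum_congr rfl fun i _ => (congrFun hanti i).symm
    linarith
  have hneg := neg_on_zero y hsum
  have hzy : z ⬝ᵥ y = x * (y ⬝ᵥ y) - y ⬝ᵥ (pathD n).mulVec y := by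
    rw [dotProduct_comm]
    conv_lhs => rw [← hAy]
    rw [hA, Matrix.sub_mulVec, Matrix.smul_mulVec, Matrix.one_mulVec, dotProduct_sub,
      dotProduct_smul, smul_eq_mul]
  have hzz : z ⬝ᵥ z = n * (n ^ 2 - 1) / 3 := by
    have h := sum_z n n
    rw [Finset.sum_range] at h
    have : z ⬝ᵥ z = ∑ i : Fin n, (2 * (i : ℝ) + 1 - n) ^ 2 := by
      simp only [dotProduct]
      refine Finset.sum_congr rfl fun i _ => ?_
      simp only [hz, uVec, wVec, Pi.sub_apply]; ring
    rw [this, h]; ring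
  have hcs : (z ⬝ᵥ y) ^ 2 ≤ (z ⬝ᵥ z) * (y ⬝ᵥ y) := by
    have := Finset.sum_mul_sq_le_sq_mul_sq Finset.univ z y
    simpa [dotProduct, sq] using this
  have hx0 : 0 < x := by nlinarith
  by_contra hc
  push Not at hc
  set p := z ⬝ᵥ y
  set q := y ⬝ᵥ y
  have hp : 2 * (n : ℝ) ≤ p := by linarith
  have hp0 : 0 < p := by linarith
  have h1 : x * q ≤ p := by linarith
  have hZ : 0 ≤ z ⬝ᵥ z := by rw [hzz]; nlinarith [mul_nonneg (by linarith : (0:ℝ) ≤ n) (by nlinarith : (0:ℝ) ≤ (n:ℝ)^2 - 1)]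
  have h2 : x * p ^ 2 ≤ (z ⬝ᵥ z) * p := by
    calc x * p ^ 2 ≤ x * ((z ⬝ᵥ z) * q) := by gcongr
      _ = (z ⬝ᵥ z) * (x * q) := by ring
      _ ≤ _ := by gcongr
  have h3 : x * p ≤ z ⬝ᵥ z := by
    apply le_of_mul_le_mul_right _ hp0
    linarith
  have h4 : x * (2 * n) ≤ x * p := by gcongr
  rw [hzz] at h3
  have h5 : 2 * x ≤ (n ^ 2 - 1) / 3 := by
    apply le_of_mul_le_mul_right _ (by linarith : (0 : ℝ) < n)
    linarith
  nlinarith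

/-- For `k ≥ 3` and `x ≥ λ(D_k)`:
`½ (u_{k-1} − w_{k-1})^T (xI − D_{k-1})⁻¹ (u_{k-1} − w_{k-1}) < k − 1`. -/
theorem gamma_lt_k_sub_one
    (k : ℕ) (hk : 3 ≤ k) (x : ℝ) (hx : maxEig (pathD k) ≤ x) :
    (1 / 2) *
        ((uVec (k - 1) - wVec (k - 1)) ⬝ᵥ
          ((x • (1 : Matrix (Fin (k - 1)) (Fin (k - 1)) ℝ) - pathD (k - 1))⁻¹).mulVec
            (uVec (k - 1) - wVec (k - 1))) < (k : ℝ) - 1 := by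
  obtain ⟨n, rfl⟩ : ∃ n, k = n + 1 := ⟨k - 1, by omega⟩
  have h := x_lower (n + 1) (by omega) x hx
  push_cast at h
  have := core n (by omega) x h
  simpa using this
end
end

section
/- Let A be an n×n real symmetric matrix with all entries nonnegative, and let x be a real number with x > λ(A), the largest eigenvalue of A. Then xI − A is invertible and every entry of (xI − A)^{−1} is nonnegative. -/
open Matrix

noncomputable section

theorem eig_bddAbove {n : ℕ} (A : Matrix (Fin n) (Fin n) ℝ) :
    BddAbove {μ : ℝ | ∃ v : Fin n → ℝ, v ≠ 0 ∧ A.mulVec v = μ • v} := by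
  have hf : {μ : ℝ | Module.End.HasEigenvalue (Matrix.toLin' A) μ}.Finite :=
    Module.End.finite_hasEigenvalue _
  refine (hf.subset ?_).bddAbove
  rintro μ ⟨v, hv, h⟩
  refine Module.End.hasEigenvalue_of_hasEigenvector (x := v) ⟨?_, hv⟩
  rw [Module.End.mem_eigenspace_iff]
  simpa using h

theorem nonneg_of_posDef {n : ℕ} (M : Matrix (Fin n) (Fin n) ℝ) (hM : M.PosDef)
    (hoff : ∀ i j, i ≠ j → M i j ≤ 0) (v : Fin n → ℝ) (hv : ∀ i, 0 ≤ (M *ᵥ v) i) :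
    ∀ i, 0 ≤ v i := by
  set p : Fin n → ℝ := fun i => max (v i) 0 with hp
  set m : Fin n → ℝ := fun i => max (-v i) 0 with hm
  have hvpm : v = p - m := by
    ext i
    simp only [hp, hm, Pi.sub_apply]
    rcases le_total (v i) 0 with h | h
    · rw [max_eq_right h, max_eq_left (by linarith)]; ring
    · rw [max_eq_left h, max_eq_right (by linarith)]; ring
  have hm0 : ∀ i, 0 ≤ m i := fun i => le_max_right _ _
  have hp0 : ∀ i, 0 ≤ p i := fun i => le_max_right _ _
  have h1 : 0 ≤ m ⬝ᵥ (M *ᵥ v) := Finset.sum_nonneg fun i _ => mul_nonneg (hm0 i) (hv i)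
  have h2 : m ⬝ᵥ (M *ᵥ p) ≤ 0 := by
    refine Finset.sum_nonpos fun i _ => ?_
    simp only [mulVec, dotProduct, Finset.mul_sum]
    refine Finset.sum_nonpos fun j _ => ?_
    by_cases hij : i = j
    · subst hij
      have : m i * p i = 0 := by
        simp only [hp, hm]
        rcases le_total (v i) 0 with h | h
        · rw [max_eq_right h]; ring
        · rw [max_eq_right (show -v i ≤ 0 by linarith)]; ring
      have h3 : m i * (M i i * p i) = M i i * (m i * p i) := by ring
      rw [h3, this, mul_zero]
    · exact mul_nonpos_of_nonneg_of_nonpos (hm0 i)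
        (mul_nonpos_of_nonpos_of_nonneg (hoff i j hij) (hp0 j))
  rw [hvpm, mulVec_sub, dotProduct_sub] at h1
  have hmz : m = 0 := by
    by_contra hne
    have := hM.dotProduct_mulVec_pos hne
    simp only [star_trivial] at this
    linarith
  intro i
  have := congrFun hmz i
  simp only [hm, Pi.zero_apply] at this
  have h4 := le_max_left (-v i) 0
  linarith

/-- If `A` is a real symmetric matrix with nonnegative entries and `x > λ(A)`,
then `xI − A` is invertible and `(xI − A)⁻¹` has nonnegative entries. -/
theorem resolvent_nonneg_of_symm_nonneg
    (n : ℕ) (A : Matrix (Fin n) (Fin n) ℝ) (hsym : A.IsSymm)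
    (hnn : ∀ i j, 0 ≤ A i j) (x : ℝ) (hx : maxEig A < x) :
    IsUnit (x • (1 : Matrix (Fin n) (Fin n) ℝ) - A) ∧
    ∀ i j, 0 ≤ (x • (1 : Matrix (Fin n) (Fin n) ℝ) - A)⁻¹ i j := by
  have hH : (x • (1 : Matrix (Fin n) (Fin n) ℝ) - A).IsHermitian := by
    rw [Matrix.IsHermitian, conjTranspose_eq_transpose_of_trivial]
    simp [hsym.eq]
  have hPD : (x • (1 : Matrix (Fin n) (Fin n) ℝ) - A).PosDef := by
    rw [hH.posDef_iff_eigenvalues_pos]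
    intro i
    have h := hH.mulVec_eigenvectorBasis i
    have hne := hH.eigenvectorBasis.orthonormal.ne_zero i
    have hle : x - hH.eigenvalues i ≤ maxEig A := by
      refine le_csSup (eig_bddAbove A) ⟨(hH.eigenvectorBasis i).ofLp, ?_, ?_⟩
      · intro h0
        apply hne
        ext k
        exact congrFun h0 k
      · rw [sub_mulVec, smul_mulVec, one_mulVec] at h
        rw [sub_smul, ← h]
        abel
    linarith
  refine ⟨hPD.isUnit, fun i j => ?_⟩
  have hdet := (Matrix.isUnit_iff_isUnit_det _).1 hPD.isUnit
  have key := nonneg_of_posDef _ hPD (fun a b hab => by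
    simp [Matrix.one_apply_ne hab, hnn a b])
    ((x • (1 : Matrix (Fin n) (Fin n) ℝ) - A)⁻¹ *ᵥ Pi.single j 1) (fun a => by
      rw [mulVec_mulVec, Matrix.mul_nonsing_inv _ hdet, one_mulVec]
      by_cases h : a = j
      · subst h; simp
      · simp [h]) i
  simpa using key
end
end
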